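/- arXiv:1210.2016 — 12 statements merged into one kernel-verified Lean document; each statement's English description precedes it below -/
import Mathlib

section
/- Let w, w′ ∈ ℂ with Re w′ ≥ 0, and let C ≥ 0 satisfy Re w′ ≤ Re w ≤ Re w′ + C, |Im w| ≤ |Im w′| + C, and |Im w′| ≤ |Im w| + C. Then for every real λ with λ > 0 and λ ≥ 2C one has (1/4)·Re(1/(λ + w′)) ≤ Re(1/(λ + w)) ≤ 4·Re(1/(λ + w′)). -/
/-!
Since `Re (1 / z) = Re z / |z|²`, comparing `Re (1 / u)` with `Re (1 / v)` in the right half-plane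
amounts to bounding `Re u * |v|²` by a multiple of `Re v * |u|²`. If the real parts and the absolute
imaginary parts of `u` and `v` differ by at most `C ≤ δ * min (Re u) (Re v)`, then the real parts
are comparable up to the factor `1 + δ`, and convexity of the square gives
`(Im v)² ≤ (1 + δ) * ((Im u)² + δ * min (Re u) (Re v)²)`. Together these yield the factor
`(1 + δ)²`, which is `4` for `δ = 1`.
-/

lemma add_mul_sq_le {R : Type*} [CommRing R] [LinearOrder R] [IsStrictOrderedRing R]
    {δ : R} (hδ : 0 ≤ δ) (x m : R) :
    (x + δ * m) ^ 2 ≤ (1 + δ) * (x ^ 2 + δ * m ^ 2) := by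
  linarith [mul_nonneg hδ (sq_nonneg (x - m))]

section Comparison

variable {u v : ℂ} {C δ : ℝ}

lemma re_mul_normSq_le_of_le_add (hu : 0 < u.re) (hv : 0 < v.re)
    (huv : u.re ≤ v.re + C) (hvu : v.re ≤ u.re + C) (him : |v.im| ≤ |u.im| + C)
    (hCu : C ≤ δ * u.re) (hCv : C ≤ δ * v.re) :
    u.re * Complex.normSq v ≤ (1 + δ) ^ 2 * (v.re * Complex.normSq u) := by
  have hδ : 0 ≤ δ := nonneg_of_mul_nonneg_left (by linarith) hu
  set m := min u.re v.re
  have hm : 0 < m := lt_min hu hv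
  have hCm : C ≤ δ * m := by
    rw [mul_min_of_nonneg _ _ hδ]
    exact le_min hCu hCv
  have hm_sq : m ^ 2 ≤ u.re * v.re := by
    rw [sq]
    exact mul_le_mul (min_le_left _ _) (min_le_right _ _) hm.le hu.le
  have hu_le : u.re ≤ (1 + δ) * v.re := by linarith
  have hv_le : v.re ≤ (1 + δ) * u.re := by linarith
  have him_sq : v.im ^ 2 ≤ (1 + δ) * (u.im ^ 2 + δ * m ^ 2) :=
    calc v.im ^ 2 = |v.im| ^ 2 := (sq_abs _).symm
      _ ≤ (|u.im| + δ * m) ^ 2 := by gcongr; linarith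
      _ ≤ (1 + δ) * (u.im ^ 2 + δ * m ^ 2) := by
        simpa only [sq_abs] using add_mul_sq_le hδ |u.im| m
  calc u.re * Complex.normSq v
      = u.re * (v.re * v.re + v.im ^ 2) := by rw [Complex.normSq_apply, sq v.im]
    _ ≤ u.re * (v.re * ((1 + δ) * u.re) + (1 + δ) * (u.im ^ 2 + δ * (u.re * v.re))) := by
        grw [him_sq, hm_sq]
        gcongr
    _ = (1 + δ) ^ 2 * (v.re * u.re ^ 2) + u.re * ((1 + δ) * u.im ^ 2) := by ring
    _ ≤ (1 + δ) ^ 2 * (v.re * u.re ^ 2) + (1 + δ) * v.re * ((1 + δ) * u.im ^ 2) := by gcongr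
    _ = (1 + δ) ^ 2 * (v.re * Complex.normSq u) := by rw [Complex.normSq_apply]; ring

lemma re_inv_le_mul_re_inv_of_le_add (hu : 0 < u.re) (hv : 0 < v.re)
    (huv : u.re ≤ v.re + C) (hvu : v.re ≤ u.re + C) (him : |v.im| ≤ |u.im| + C)
    (hCu : C ≤ δ * u.re) (hCv : C ≤ δ * v.re) :
    u⁻¹.re ≤ (1 + δ) ^ 2 * v⁻¹.re := by
  have normSq_pos {z : ℂ} (hz : 0 < z.re) : 0 < Complex.normSq z :=
    Complex.normSq_pos.2 (Complex.ne_zero_of_re_pos hz)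
  rw [Complex.inv_re, Complex.inv_re, ← mul_div_assoc,
    div_le_div_iff₀ (normSq_pos hu) (normSq_pos hv), mul_assoc]
  exact re_mul_normSq_le_of_le_add hu hv huv hvu him hCu hCv

end Comparison

theorem stmt_1_general {w w' : ℂ} {C δ l : ℝ} (hw : 0 < l + w.re) (hw' : 0 < l + w'.re)
    (hre : w.re ≤ w'.re + C) (hre' : w'.re ≤ w.re + C)
    (him : |w.im| ≤ |w'.im| + C) (him' : |w'.im| ≤ |w.im| + C)
    (hC : C ≤ δ * (l + w.re)) (hC' : C ≤ δ * (l + w'.re)) :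
    (1 / (1 + δ) ^ 2) * (1 / ((l : ℂ) + w')).re ≤ (1 / ((l : ℂ) + w)).re ∧
      (1 / ((l : ℂ) + w)).re ≤ (1 + δ) ^ 2 * (1 / ((l : ℂ) + w')).re := by
  have hδ : 0 ≤ δ := nonneg_of_mul_nonneg_left (by linarith) hw
  have shift_re (z : ℂ) : ((l : ℂ) + z).re = l + z.re := by simp
  have shift_im (z : ℂ) : ((l : ℂ) + z).im = z.im := by simp
  simp only [one_div]
  constructor
  · rw [inv_mul_le_iff₀ (by positivity)]
    apply re_inv_le_mul_re_inv_of_le_add (C := C) <;> simp only [shift_re, shift_im] <;> linarith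
  · apply re_inv_le_mul_re_inv_of_le_add (C := C) <;> simp only [shift_re, shift_im] <;> linarith

/-- Pointwise comparison of resolvent kernels (estimate (2.9) in the proof of
Theorem 2.1): if `Re w' ≥ 0`, `Re w' ≤ Re w ≤ Re w' + C`, `|Im w| ≤ |Im w'| + C`,
`|Im w'| ≤ |Im w| + C`, then for every `λ > 0` with `λ ≥ 2C`,
`(1/4)·Re(1/(λ+w')) ≤ Re(1/(λ+w)) ≤ 4·Re(1/(λ+w'))`. -/
theorem stmt_1 (w w' : ℂ) (C : ℝ) (hC : 0 ≤ C) (hre' : 0 ≤ w'.re)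
    (h1 : w'.re ≤ w.re) (h2 : w.re ≤ w'.re + C)
    (h3 : |w.im| ≤ |w'.im| + C) (h4 : |w'.im| ≤ |w.im| + C) :
    ∀ l : ℝ, 0 < l → 2 * C ≤ l →
      (1 / 4) * (1 / ((l : ℂ) + w')).re ≤ (1 / ((l : ℂ) + w)).re ∧
      (1 / ((l : ℂ) + w)).re ≤ 4 * (1 / ((l : ℂ) + w')).re := by
  intro l hl hCl
  rw [show (4 : ℝ) = (1 + 1) ^ 2 by norm_num]
  apply stmt_1_general (C := C) <;> linarith
end

section
/- Let n ≥ 1, let A, B : ℝⁿ → ℝ be Borel measurable with 1 ≤ A(z) ≤ B(z) for all z, let g : ℝⁿ → [0,∞) be Borel measurable, and let f : [1,∞) → (0,∞) be increasing. Then ∫₁^∞ (λ f(λ))^{-1} ( ∫_{{z : A(z) ≤ λ and B(z) ≤ A(z) f(A(z))}} λ·(λ² + B(z)²)^{-1} g(z) dz ) dλ ≤ (π/2) ∫_{ℝⁿ} A(z)·B(z)^{-2}·g(z) dz. -/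
open MeasureTheory

/-!
On the inner domain of integration, `B(z) ≤ A(z) f(A(z)) ≤ A(z) f(λ)`, so the factor `1 / f(λ)` is
at most `A(z) / B(z)`, which does not depend on `λ`. After Tonelli only
`∫₀^∞ (λ² + B(z)²)⁻¹ dλ = π / (2 B(z))` remains.
-/

open Set
open scoped ENNReal

theorem inv_sq_add_sq_eq_mul_inv_one_add_sq {b : ℝ} (hb : b ≠ 0) (x : ℝ) :
    (x ^ 2 + b ^ 2)⁻¹ = (b ^ 2)⁻¹ * (1 + (b⁻¹ * x) ^ 2)⁻¹ := by
  rw [← mul_inv]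
  congr 1
  field_simp
  ring

theorem integrable_inv_sq_add_sq {b : ℝ} (hb : b ≠ 0) :
    Integrable fun x : ℝ ↦ (x ^ 2 + b ^ 2)⁻¹ := by
  simp only [inv_sq_add_sq_eq_mul_inv_one_add_sq hb]
  exact (integrable_inv_one_add_sq.comp_mul_left' (inv_ne_zero hb)).const_mul _

theorem integral_Ioi_inv_sq_add_sq {b : ℝ} (hb : 0 < b) (a : ℝ) :
    ∫ x in Ioi a, (x ^ 2 + b ^ 2)⁻¹ = b⁻¹ * (Real.pi / 2 - Real.arctan (b⁻¹ * a)) := by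
  simp only [inv_sq_add_sq_eq_mul_inv_one_add_sq hb.ne']
  rw [integral_const_mul,
    integral_comp_mul_left_Ioi (fun x ↦ (1 + x ^ 2)⁻¹) a (inv_pos.2 hb),
    integral_Ioi_inv_one_add_sq, smul_eq_mul]
  field_simp

theorem lintegral_Ioi_zero_inv_sq_add_sq {b : ℝ} (hb : 0 < b) :
    ∫⁻ x in Ioi (0 : ℝ), ENNReal.ofReal (x ^ 2 + b ^ 2)⁻¹ =
      ENNReal.ofReal (Real.pi / (2 * b)) := by
  rw [← ofReal_integral_eq_lintegral_ofReal (integrable_inv_sq_add_sq hb.ne').integrableOn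
    (.of_forall fun x ↦ by positivity), integral_Ioi_inv_sq_add_sq hb, mul_zero,
    Real.arctan_zero, sub_zero, inv_mul_eq_div, div_div]

section Measure

variable {α : Type*} [MeasurableSpace α] {μ : Measure α} {B : α → ℝ}

theorem lintegral_Ioi_zero_lintegral_mul_inv_sq_add_sq [SFinite μ] {w : α → ℝ≥0∞}
    (hw : AEMeasurable w μ) (hB : AEMeasurable B μ) (hB_pos : ∀ z, 0 < B z) :
    ∫⁻ l in Ioi (0 : ℝ), ∫⁻ z, w z * ENNReal.ofReal (l ^ 2 + B z ^ 2)⁻¹ ∂μ =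
      ∫⁻ z, w z * ENNReal.ofReal (Real.pi / (2 * B z)) ∂μ := by
  have h_meas : AEMeasurable
      (Function.uncurry fun l z ↦ w z * ENNReal.ofReal (l ^ 2 + B z ^ 2)⁻¹)
      ((volume.restrict (Ioi (0 : ℝ))).prod μ) :=
    hw.comp_snd.mul
      (((measurable_fst.pow_const 2).aemeasurable.add (hB.comp_snd.pow_const 2)).inv.ennreal_ofReal)
  rw [lintegral_lintegral_swap h_meas]
  refine lintegral_congr fun z ↦ ?_
  rw [lintegral_const_mul _ (by fun_prop), lintegral_Ioi_zero_inv_sq_add_sq (hB_pos z)]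

theorem ofReal_mul_setLIntegral_le_of_inv_le {w : α → ℝ} {g : α → ℝ≥0∞} {S : Set α} {l c : ℝ}
    (hw : AEMeasurable w μ) (hB : AEMeasurable B μ) (hg : AEMeasurable g μ) (hl : 0 < l)
    (hc : 0 < c) (h_inv_le : ∀ z ∈ S, c⁻¹ ≤ w z) :
    ENNReal.ofReal (1 / (l * c)) * ∫⁻ z in S, ENNReal.ofReal (l / (l ^ 2 + B z ^ 2)) * g z ∂μ ≤
      ∫⁻ z, ENNReal.ofReal (w z) * g z * ENNReal.ofReal (l ^ 2 + B z ^ 2)⁻¹ ∂μ := by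
  rw [← lintegral_const_mul' _ _ ENNReal.ofReal_ne_top]
  refine (setLIntegral_mono_ae (by fun_prop) (.of_forall fun z hz ↦ ?_)).trans
    (setLIntegral_le_lintegral S _)
  have h_cancel : 1 / (l * c) * (l / (l ^ 2 + B z ^ 2)) = c⁻¹ * (l ^ 2 + B z ^ 2)⁻¹ := by
    field_simp
  calc ENNReal.ofReal (1 / (l * c)) * (ENNReal.ofReal (l / (l ^ 2 + B z ^ 2)) * g z)
      = ENNReal.ofReal c⁻¹ * g z * ENNReal.ofReal (l ^ 2 + B z ^ 2)⁻¹ := by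
        rw [← mul_assoc, ← ENNReal.ofReal_mul (by positivity), h_cancel,
          ENNReal.ofReal_mul (by positivity), mul_right_comm]
    _ ≤ ENNReal.ofReal (w z) * g z * ENNReal.ofReal (l ^ 2 + B z ^ 2)⁻¹ := by
        gcongr
        exact h_inv_le z hz

theorem stmt_3_general [SFinite μ] {A : α → ℝ} {g : α → ℝ≥0∞} {f : ℝ → ℝ} {s : Set ℝ}
    (hs : MeasurableSet s) (hs_pos : s ⊆ Ioi 0)
    (hA : AEMeasurable A μ) (hB : AEMeasurable B μ) (hg : AEMeasurable g μ)
    (hA_mem : ∀ z, A z ∈ s) (hB_pos : ∀ z, 0 < B z)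
    (hf_pos : ∀ x ∈ s, 0 < f x) (hf_mono : MonotoneOn f s) :
    ∫⁻ l in s, ENNReal.ofReal (1 / (l * f l)) *
        ∫⁻ z in {z | A z ≤ l ∧ B z ≤ A z * f (A z)},
          ENNReal.ofReal (l / (l ^ 2 + B z ^ 2)) * g z ∂μ
      ≤ ENNReal.ofReal (Real.pi / 2) * ∫⁻ z, ENNReal.ofReal (A z / B z ^ 2) * g z ∂μ := by
  have hA_nonneg (z) : 0 ≤ A z := (hs_pos (hA_mem z)).le
  have h_inv_le (l) (hl : l ∈ s) (z) (hz : A z ≤ l ∧ B z ≤ A z * f (A z)) :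
      (f l)⁻¹ ≤ A z / B z := by
    rw [inv_le_iff_one_le_mul₀ (hf_pos l hl), div_mul_eq_mul_div, one_le_div (hB_pos z)]
    exact hz.2.trans (mul_le_mul_of_nonneg_left (hf_mono (hA_mem z) hl hz.1) (hA_nonneg z))
  calc
    _ ≤ ∫⁻ l in s, ∫⁻ z, ENNReal.ofReal (A z / B z) * g z *
          ENNReal.ofReal (l ^ 2 + B z ^ 2)⁻¹ ∂μ :=
      setLIntegral_mono' hs fun l hl ↦ ofReal_mul_setLIntegral_le_of_inv_le (hA.div hB) hB hg
        (hs_pos hl) (hf_pos l hl) (h_inv_le l hl)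
    _ ≤ ∫⁻ l in Ioi (0 : ℝ), ∫⁻ z, ENNReal.ofReal (A z / B z) * g z *
          ENNReal.ofReal (l ^ 2 + B z ^ 2)⁻¹ ∂μ := lintegral_mono_set hs_pos
    _ = ∫⁻ z, ENNReal.ofReal (A z / B z) * g z * ENNReal.ofReal (Real.pi / (2 * B z)) ∂μ :=
      lintegral_Ioi_zero_lintegral_mul_inv_sq_add_sq (by fun_prop) hB hB_pos
    _ = ∫⁻ z, ENNReal.ofReal (Real.pi / 2) * (ENNReal.ofReal (A z / B z ^ 2) * g z) ∂μ := by
      refine lintegral_congr fun z ↦ ?_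
      rw [mul_right_comm, ← mul_assoc,
        ← ENNReal.ofReal_mul (div_nonneg (hA_nonneg z) (hB_pos z).le),
        ← ENNReal.ofReal_mul (by positivity)]
      congr 2
      field_simp
    _ = _ := lintegral_const_mul' _ _ ENNReal.ofReal_ne_top

end Measure

/-- The estimate in the proof of Lemma 4.2: for measurable `A, B : ℝⁿ → ℝ` with
`1 ≤ A ≤ B`, measurable `g ≥ 0`, and increasing `f : [1,∞) → (0,∞)`,
`∫₁^∞ (λ f(λ))⁻¹ (∫_{A(z)≤λ, B(z)≤A(z)f(A(z))} λ (λ²+B(z)²)⁻¹ g(z) dz) dλ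
  ≤ (π/2) ∫ A(z) B(z)⁻² g(z) dz`. -/
theorem stmt_3 (n : ℕ) (hn : 1 ≤ n)
    (A B : EuclideanSpace ℝ (Fin n) → ℝ) (hA : Measurable A) (hB : Measurable B)
    (hAB : ∀ z, 1 ≤ A z ∧ A z ≤ B z)
    (g : EuclideanSpace ℝ (Fin n) → ℝ) (hg : Measurable g) (hg0 : ∀ z, 0 ≤ g z)
    (f : ℝ → ℝ) (hf_pos : ∀ x, 1 ≤ x → 0 < f x) (hf_mono : MonotoneOn f (Set.Ici 1)) :
    ∫⁻ l in Set.Ici (1 : ℝ), ENNReal.ofReal (1 / (l * f l)) *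
        ∫⁻ z in {z | A z ≤ l ∧ B z ≤ A z * f (A z)},
          ENNReal.ofReal (l / (l ^ 2 + B z ^ 2) * g z)
      ≤ ENNReal.ofReal (Real.pi / 2) *
        ∫⁻ z, ENNReal.ofReal (A z / B z ^ 2 * g z) := by
  simp only [ENNReal.ofReal_mul' (hg0 _)]
  exact stmt_3_general measurableSet_Ici (Ici_subset_Ioi.2 one_pos) hA.aemeasurable hB.aemeasurable
    hg.ennreal_ofReal.aemeasurable (fun z ↦ (hAB z).1)
    (fun z ↦ one_pos.trans_le ((hAB z).1.trans (hAB z).2)) hf_pos hf_mono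
end

section
/- Let n ≥ 1, let A, B : ℝⁿ → ℝ be Borel measurable with 1 ≤ A(z) ≤ B(z) for all z, let g : ℝⁿ → [0,∞) be Borel measurable with ∫_{ℝⁿ} A(z) B(z)^{-2} g(z) dz < ∞, and let f : [1,∞) → (0,∞) be increasing with ∫₁^∞ (λ f(λ))^{-1} dλ = ∞. Suppose that the limit L := lim_{λ→∞} ∫_{{z : A(z) ≤ λ}} λ·(λ² + B(z)²)^{-1} g(z) dz exists in ℝ, and that lim_{λ→∞} ∫_{{z : A(z) ≤ λ and B(z) > A(z) f(A(z))}} λ·(λ² + B(z)²)^{-1} g(z) dz = 0. Then L = 0. -/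
open MeasureTheory Filter

open scoped ENNReal

/-!
Absorb the density `g` into the measure. Since `∫₁^∞ (λ f(λ))⁻¹ dλ = ∞`, a nonnegative function of
`λ` that is integrable against the weight `(λ f(λ))⁻¹` has lower limit `0` at infinity. On the set
where `B ≤ A f(A)`, monotonicity of `f` gives `f(λ)⁻¹ ≤ f(A)⁻¹ ≤ A / B` for `λ ≥ A`, so by Tonelli
the weighted integral of `∫_{A ≤ λ} λ (λ² + B²)⁻¹` is at most
`∫ (A / B) ∫ (λ² + B²)⁻¹ dλ = π ∫ A B⁻² < ∞`. The complementary set contributes nothing in the limit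
by hypothesis.
-/

lemma setLIntegral_Ici_eq_top_of_Ico_ne_top {ι : Type*} [LinearOrder ι] [MeasurableSpace ι]
    {μ : Measure ι} {w : ι → ℝ≥0∞} {a b : ι} (hw : ∫⁻ x in Set.Ici a, w x ∂μ = ⊤)
    (hab : a ≤ b) (hb : ∫⁻ x in Set.Ico a b, w x ∂μ ≠ ⊤) :
    ∫⁻ x in Set.Ici b, w x ∂μ = ⊤ := by
  have hsplit := lintegral_union_le (μ := μ) w (Set.Ico a b) (Set.Ici b)
  rw [Set.Ico_union_Ici_eq_Ici hab, hw, top_le_iff, ENNReal.add_eq_top] at hsplit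
  exact hsplit.resolve_left hb

lemma liminf_atTop_eq_zero_of_setLIntegral_mul_ne_top {ι : Type*} [LinearOrder ι]
    [TopologicalSpace ι] [OrderClosedTopology ι] [MeasurableSpace ι] [OpensMeasurableSpace ι]
    {μ : Measure ι} {w F : ι → ℝ≥0∞} {a : ι}
    (hw : ∫⁻ x in Set.Ici a, w x ∂μ = ⊤) (hw_loc : ∀ b, ∫⁻ x in Set.Ico a b, w x ∂μ ≠ ⊤)
    (hwF : ∫⁻ x in Set.Ici a, w x * F x ∂μ ≠ ⊤) : liminf F atTop = 0 := by
  have : Nonempty ι := ⟨a⟩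
  by_contra hne
  obtain ⟨c, hc_pos, hc_lt⟩ := exists_between (pos_iff_ne_zero.2 hne)
  obtain ⟨b, hb⟩ := eventually_atTop.1
    ((eventually_lt_of_lt_liminf hc_lt).and (eventually_ge_atTop a))
  have hab : a ≤ b := (hb b le_rfl).2
  refine hwF (top_le_iff.1 ?_)
  calc
    ⊤ = c * ∫⁻ x in Set.Ici b, w x ∂μ := by
      rw [setLIntegral_Ici_eq_top_of_Ico_ne_top hw hab (hw_loc b), ENNReal.mul_top hc_pos.ne']
    _ ≤ ∫⁻ x in Set.Ici b, c * w x ∂μ := lintegral_const_mul_le _ _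
    _ ≤ ∫⁻ x in Set.Ici b, w x * F x ∂μ :=
      setLIntegral_mono' measurableSet_Ici fun x hx => by
        rw [mul_comm]
        gcongr
        exact (hb x hx).1.le
    _ ≤ ∫⁻ x in Set.Ici a, w x * F x ∂μ := lintegral_mono_set (Set.Ici_subset_Ici.2 hab)

section Measure

variable {α : Type*} [MeasurableSpace α] {μ : Measure α}

lemma sigmaFinite_of_lintegral_ne_top {φ : α → ℝ≥0∞} (hφ : Measurable φ) (hφ0 : ∀ x, φ x ≠ 0)
    (hint : ∫⁻ x, φ x ∂μ ≠ ⊤) : SigmaFinite μ := by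
  have := isFiniteMeasure_withDensity hint
  rw [← withDensity_inv_same hφ (.of_forall hφ0) ((ae_lt_top hφ hint).mono fun _ h => h.ne)]
  exact SigmaFinite.withDensity_of_ne_top' fun x => ENNReal.inv_ne_top.2 (hφ0 x)

lemma lintegral_ofReal_mul_eq_lintegral_withDensity {g h : α → ℝ} (hg : Measurable g)
    (hg0 : ∀ x, 0 ≤ g x) (hh : Measurable h) :
    ∫⁻ x, ENNReal.ofReal (h x * g x) ∂μ =
      ∫⁻ x, ENNReal.ofReal (h x) ∂μ.withDensity fun x => ENNReal.ofReal (g x) := by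
  rw [lintegral_withDensity_eq_lintegral_mul μ hg.ennreal_ofReal hh.ennreal_ofReal]
  exact lintegral_congr fun x => by rw [ENNReal.ofReal_mul' (hg0 x), mul_comm, Pi.mul_apply]

lemma lintegral_mul_setLIntegral_sublevel_swap {ι : Type*} [LinearOrder ι] [TopologicalSpace ι]
    [OrderClosedTopology ι] [SecondCountableTopology ι] [MeasurableSpace ι]
    [OpensMeasurableSpace ι] {κ : Measure ι} [SFinite κ] [SFinite μ] {A : α → ι}
    (hA : Measurable A) {w : ι → ℝ≥0∞} (hw : AEMeasurable w κ) {k : ι → α → ℝ≥0∞}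
    (hk : Measurable (Function.uncurry k)) :
    ∫⁻ l, w l * ∫⁻ z in {z | A z ≤ l}, k l z ∂μ ∂κ =
      ∫⁻ z, ∫⁻ l in Set.Ici (A z), w l * k l z ∂κ ∂μ := by
  let S : Set (ι × α) := {q | A q.2 ≤ q.1}
  have hS : MeasurableSet S := measurableSet_le (hA.comp measurable_snd) measurable_fst
  calc
    _ = ∫⁻ l, ∫⁻ z, S.indicator (fun q => w q.1 * k q.1 q.2) (l, z) ∂μ ∂κ := by
      refine lintegral_congr fun l => ?_
      rw [← lintegral_const_mul _ hk.of_uncurry_left,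
        ← lintegral_indicator (measurableSet_le hA measurable_const)]
      rfl
    _ = ∫⁻ z, ∫⁻ l, S.indicator (fun q => w q.1 * k q.1 q.2) (l, z) ∂κ ∂μ :=
      lintegral_lintegral_swap ((hw.comp_fst.mul hk.aemeasurable).indicator hS)
    _ = _ := by
      refine lintegral_congr fun z => ?_
      rw [← lintegral_indicator measurableSet_Ici]
      rfl

lemma measurable_comp_of_monotoneOn {β γ : Type*} [LinearOrder β] [TopologicalSpace β]
    [OrderClosedTopology β] [MeasurableSpace β] [BorelSpace β] [LinearOrder γ] [TopologicalSpace γ]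
    [OrderTopology γ] [SecondCountableTopology γ] [MeasurableSpace γ] [BorelSpace γ]
    {f : β → γ} {s : Set β} (hf : MonotoneOn f s) {A : α → β} (hA : Measurable A)
    (hAs : ∀ z, A z ∈ s) : Measurable fun z => f (A z) :=
  have hmono : Monotone fun x : s => f x := fun x y hxy => hf x.2 y.2 hxy
  hmono.measurable.comp (hA.subtype_mk (h := hAs))

end Measure

lemma lintegral_ofReal_inv_sq_add_sq {b : ℝ} (hb : 0 < b) :
    ∫⁻ l : ℝ, ENNReal.ofReal (1 / (l ^ 2 + b ^ 2)) = ENNReal.ofReal (Real.pi / b) := by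
  lift b to NNReal using hb.le
  have hpdf (l : ℝ) : ENNReal.ofReal (1 / (l ^ 2 + (b : ℝ) ^ 2)) =
      ENNReal.ofReal (Real.pi / b) * ProbabilityTheory.cauchyPDF 0 b l := by
    rw [ProbabilityTheory.cauchyPDF_def, ProbabilityTheory.cauchyPDFReal_def,
      ← ENNReal.ofReal_mul (by positivity), sub_zero]
    congr 1
    field_simp
  simp_rw [hpdf]
  rw [lintegral_const_mul _ (ProbabilityTheory.measurable_cauchyPDF _ _),
    ProbabilityTheory.lintegral_cauchyPDF_eq_one _ (NNReal.coe_ne_zero.1 hb.ne'), mul_one]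

section Weight

variable {f : ℝ → ℝ}

lemma setLIntegral_Ici_inv_mul_cauchy_le {a b : ℝ} (ha : 0 < a) (hb : 0 < b)
    (hf : MonotoneOn f (Set.Ici a)) (hab : b ≤ a * f a) :
    ∫⁻ l in Set.Ici a, ENNReal.ofReal (1 / (l * f l)) * ENNReal.ofReal (l / (l ^ 2 + b ^ 2)) ≤
      ENNReal.ofReal Real.pi * ENNReal.ofReal (a / b ^ 2) := by
  have hkernel {l : ℝ} (hl : a ≤ l) : 1 / (l * f l) * (l / (l ^ 2 + b ^ 2)) ≤
      a / b * (1 / (l ^ 2 + b ^ 2)) := by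
    have hl0 : 0 < l := ha.trans_le hl
    have hfl : b ≤ a * f l := hab.trans (by gcongr; exact hf Set.self_mem_Ici hl hl)
    have hfl0 : 0 < f l := pos_of_mul_pos_right (hb.trans_le hfl) ha.le
    have hinv : 1 / f l ≤ a / b := by rwa [div_le_div_iff₀ hfl0 hb, one_mul]
    calc
      _ = 1 / f l * (1 / (l ^ 2 + b ^ 2)) := by field_simp
      _ ≤ _ := by gcongr
  calc
    _ ≤ ∫⁻ l in Set.Ici a, ENNReal.ofReal (a / b) * ENNReal.ofReal (1 / (l ^ 2 + b ^ 2)) :=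
      setLIntegral_mono' measurableSet_Ici fun l hl => by
        have hl0 : 0 ≤ l := ha.le.trans hl
        rw [← ENNReal.ofReal_mul' (by positivity), ← ENNReal.ofReal_mul (by positivity)]
        exact ENNReal.ofReal_le_ofReal (hkernel hl)
    _ ≤ ∫⁻ l : ℝ, ENNReal.ofReal (a / b) * ENNReal.ofReal (1 / (l ^ 2 + b ^ 2)) :=
      setLIntegral_le_lintegral _ _
    _ = _ := by
      rw [lintegral_const_mul _ (by fun_prop), lintegral_ofReal_inv_sq_add_sq hb,
        ← ENNReal.ofReal_mul (by positivity), ← ENNReal.ofReal_mul Real.pi_nonneg]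
      congr 1
      field_simp

lemma setLIntegral_Ico_one_div_mul_ne_top {a : ℝ} (ha : 0 < a) (hfa : 0 < f a)
    (hf : MonotoneOn f (Set.Ici a)) (M : ℝ) :
    ∫⁻ l in Set.Ico a M, ENNReal.ofReal (1 / (l * f l)) ≠ ⊤ := by
  refine (setLIntegral_lt_top_of_le_nnreal measure_Ico_lt_top.ne
    ⟨(1 / (a * f a)).toNNReal, fun l hl => ENNReal.ofReal_le_ofReal ?_⟩).ne
  have hfl : f a ≤ f l := hf Set.self_mem_Ici hl.1 hl.1
  exact one_div_le_one_div_of_le (mul_pos ha hfa)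
    (mul_le_mul hl.1 hfl hfa.le (ha.le.trans hl.1))

variable {α : Type*} [MeasurableSpace α] {μ : Measure α} {A B : α → ℝ}

lemma setLIntegral_inv_mul_setLIntegral_sublevel_le [SFinite μ] (hA : Measurable A)
    (hB : Measurable B) (hA1 : ∀ z, 1 ≤ A z) (hB0 : ∀ z, 0 < B z) (hf : MonotoneOn f (Set.Ici 1))
    (hBA : ∀ᵐ z ∂μ, B z ≤ A z * f (A z)) :
    ∫⁻ l in Set.Ici (1 : ℝ), ENNReal.ofReal (1 / (l * f l)) *
        ∫⁻ z in {z | A z ≤ l}, ENNReal.ofReal (l / (l ^ 2 + B z ^ 2)) ∂μ ≤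
      ENNReal.ofReal Real.pi * ∫⁻ z, ENNReal.ofReal (A z / B z ^ 2) ∂μ := by
  have hw : AEMeasurable (fun l => ENNReal.ofReal (1 / (l * f l)))
      (volume.restrict (Set.Ici (1 : ℝ))) := by
    have := aemeasurable_restrict_of_monotoneOn (μ := volume) measurableSet_Ici hf
    fun_prop
  rw [lintegral_mul_setLIntegral_sublevel_swap hA hw (by fun_prop),
    ← lintegral_const_mul _ (by fun_prop)]
  refine lintegral_mono_ae (hBA.mono fun z hz => ?_)
  have hsub : Set.Ici (A z) ⊆ Set.Ici 1 := Set.Ici_subset_Ici.2 (hA1 z)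
  rw [Measure.restrict_restrict_of_subset hsub]
  exact setLIntegral_Ici_inv_mul_cauchy_le (one_pos.trans_le (hA1 z)) (hB0 z) (hf.mono hsub) hz

lemma liminf_setLIntegral_sublevel_eq_zero_of_ae_le (hA : Measurable A)
    (hB : Measurable B) (hA1 : ∀ z, 1 ≤ A z) (hB0 : ∀ z, 0 < B z)
    (hfin : ∫⁻ z, ENNReal.ofReal (A z / B z ^ 2) ∂μ ≠ ⊤) (hf1 : 0 < f 1)
    (hf : MonotoneOn f (Set.Ici 1))
    (hf_div : ∫⁻ l in Set.Ici (1 : ℝ), ENNReal.ofReal (1 / (l * f l)) = ⊤)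
    (hBA : ∀ᵐ z ∂μ, B z ≤ A z * f (A z)) :
    liminf (fun l => ∫⁻ z in {z | A z ≤ l}, ENNReal.ofReal (l / (l ^ 2 + B z ^ 2)) ∂μ) atTop =
      0 := by
  have : SigmaFinite μ := sigmaFinite_of_lintegral_ne_top (by fun_prop) (fun z =>
    (ENNReal.ofReal_pos.2 (div_pos (one_pos.trans_le (hA1 z)) (pow_pos (hB0 z) 2))).ne') hfin
  exact liminf_atTop_eq_zero_of_setLIntegral_mul_ne_top hf_div
    (setLIntegral_Ico_one_div_mul_ne_top one_pos hf1 hf)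
    (ne_top_of_le_ne_top (ENNReal.mul_ne_top ENNReal.ofReal_ne_top hfin)
      (setLIntegral_inv_mul_setLIntegral_sublevel_le hA hB hA1 hB0 hf hBA))

end Weight

theorem stmt_4_general {α : Type*} [MeasurableSpace α] (μ : Measure α)
    (A B : α → ℝ) (hA : Measurable A) (hB : Measurable B)
    (hA1 : ∀ z, 1 ≤ A z) (hB0 : ∀ z, 0 < B z)
    (hfin : ∫⁻ z, ENNReal.ofReal (A z / B z ^ 2) ∂μ ≠ ⊤)
    (f : ℝ → ℝ) (hf1 : 0 < f 1) (hf_mono : MonotoneOn f (Set.Ici 1))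
    (hf_div : ∫⁻ l in Set.Ici (1 : ℝ), ENNReal.ofReal (1 / (l * f l)) = ⊤)
    (h0 : Tendsto (fun l : ℝ => ∫⁻ z in {z | A z ≤ l ∧ A z * f (A z) < B z},
        ENNReal.ofReal (l / (l ^ 2 + B z ^ 2)) ∂μ) atTop (nhds 0)) :
    liminf (fun l : ℝ => ∫⁻ z in {z | A z ≤ l},
        ENNReal.ofReal (l / (l ^ 2 + B z ^ 2)) ∂μ) atTop = 0 := by
  let G : Set α := {z | B z ≤ A z * f (A z)}
  have hG : MeasurableSet G :=
    measurableSet_le hB (hA.mul (measurable_comp_of_monotoneOn hf_mono hA hA1))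
  have hsplit (l : ℝ) : ∫⁻ z in {z | A z ≤ l}, ENNReal.ofReal (l / (l ^ 2 + B z ^ 2)) ∂μ =
      (∫⁻ z in {z | A z ≤ l}, ENNReal.ofReal (l / (l ^ 2 + B z ^ 2)) ∂μ.restrict G) +
        ∫⁻ z in {z | A z ≤ l ∧ A z * f (A z) < B z},
          ENNReal.ofReal (l / (l ^ 2 + B z ^ 2)) ∂μ := by
    have hdiff : {z | A z ≤ l ∧ A z * f (A z) < B z} = {z | A z ≤ l} \ G := by
      ext z
      simp [G]
    rw [Measure.restrict_restrict (measurableSet_le hA measurable_const), hdiff,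
      lintegral_inter_add_sdiff _ _ hG]
  simp_rw [hsplit]
  exact (ENNReal.liminf_add_of_right_tendsto_zero h0 _).trans
    (liminf_setLIntegral_sublevel_eq_zero_of_ae_le hA hB hA1 hB0
      (ne_top_of_le_ne_top hfin (setLIntegral_le_lintegral _ _)) hf1 hf_mono hf_div
      (ae_restrict_mem hG))

/-- The step (H21) ⟹ (gap) in the proof of Lemma 4.2: with `1 ≤ A ≤ B`,
`g ≥ 0`, `∫ A B⁻² g < ∞` and `f` increasing with `∫₁^∞ (λ f(λ))⁻¹ dλ = ∞`,
if the limit `L` of `∫_{A≤λ} λ (λ²+B²)⁻¹ g dz` exists in `ℝ` and the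
corresponding integral over `{A ≤ λ, B > A f(A)}` tends to `0`, then `L = 0`. -/
theorem stmt_4 (n : ℕ) (hn : 1 ≤ n)
    (A B : EuclideanSpace ℝ (Fin n) → ℝ) (hA : Measurable A) (hB : Measurable B)
    (hAB : ∀ z, 1 ≤ A z ∧ A z ≤ B z)
    (g : EuclideanSpace ℝ (Fin n) → ℝ) (hg : Measurable g) (hg0 : ∀ z, 0 ≤ g z)
    (hfin : ∫⁻ z, ENNReal.ofReal (A z / B z ^ 2 * g z) < ⊤)
    (f : ℝ → ℝ) (hf_pos : ∀ x, 1 ≤ x → 0 < f x) (hf_mono : MonotoneOn f (Set.Ici 1))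
    (hf_div : ∫⁻ l in Set.Ici (1 : ℝ), ENNReal.ofReal (1 / (l * f l)) = ⊤)
    (L : ℝ≥0∞) (hLfin : L ≠ ⊤)
    (hL : Tendsto (fun l : ℝ => ∫⁻ z in {z | A z ≤ l},
        ENNReal.ofReal (l / (l ^ 2 + B z ^ 2) * g z)) atTop (nhds L))
    (h0 : Tendsto (fun l : ℝ => ∫⁻ z in {z | A z ≤ l ∧ A z * f (A z) < B z},
        ENNReal.ofReal (l / (l ^ 2 + B z ^ 2) * g z)) atTop (nhds 0)) :
    L = 0 := by
  simp (disch := fun_prop) only [← restrict_withDensity',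
    lintegral_ofReal_mul_eq_lintegral_withDensity hg hg0] at hfin hL h0
  exact hL.liminf_eq.symm.trans <| stmt_4_general _ A B hA hB (fun z => (hAB z).1)
    (fun z => by linarith [hAB z]) hfin.ne f (hf_pos 1 le_rfl) hf_mono hf_div h0
end

section
/- Let n ≥ 1, let A, I : ℝⁿ → ℝ be Borel measurable with A(z) ≥ 1 for all z, set B(z) := √(A(z)² + I(z)²), and let g : ℝⁿ → [0,∞) be Borel measurable with ∫_{ℝⁿ} A(z) B(z)^{-2} g(z) dz < ∞. Then lim_{λ→∞} Σ_{k=1}^∞ ∫_{{z : B(z) > √2·A(z), k ≤ |I(z)|/A(z) < k+1, and λ ≥ (k+1)|I(z)|}} λ·(λ² + I(z)²)^{-1} g(z) dz = 0. -/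
open MeasureTheory Filter

open scoped ENNReal

/-!
On the `k`-th shell `A ≤ |I| < (k + 2) A` and `(k + 2) |I| ≤ l`, so the shell index cancels in
`I² ≤ (k + 2) A |I| ≤ A l`. Hence `l / (l² + I²) ≤ 1 / l ≤ A / I² ≤ 2 A / (A² + I²)` on every shell,
uniformly in `k` and `l`. As the shells are disjoint, the sum is a single integral whose integrand
is at most `2 A B⁻² g` and tends to `0` pointwise.
-/

section DominatedConvergence

variable {X ι κ : Type*} [MeasurableSpace X] {μ : Measure X} {L : Filter ι}
  [L.IsCountablyGenerated] {f : ι → X → ℝ≥0∞}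

theorem tendsto_setLIntegral_zero_of_dominated {s : ι → Set X} (bound : X → ℝ≥0∞)
    (hf : ∀ᶠ i in L, AEMeasurable (f i) μ) (hs : ∀ᶠ i in L, NullMeasurableSet (s i) μ)
    (h_bound : ∀ᶠ i in L, ∀ᵐ x ∂μ, x ∈ s i → f i x ≤ bound x) (h_fin : ∫⁻ x, bound x ∂μ ≠ ∞)
    (h_lim : ∀ᵐ x ∂μ, Tendsto (fun i => f i x) L (nhds 0)) :
    Tendsto (fun i => ∫⁻ x in s i, f i x ∂μ) L (nhds 0) := by
  have h_indicator : Tendsto (fun i => ∫⁻ x, (s i).indicator (f i) x ∂μ) L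
      (nhds (∫⁻ _, 0 ∂μ)) := by
    refine tendsto_lintegral_filter_of_dominated_convergence' bound ?_ ?_ h_fin ?_
    · filter_upwards [hf, hs] with i hfi hsi using hfi.indicator₀ hsi
    · filter_upwards [h_bound] with i hi
      filter_upwards [hi] with x hx using Set.indicator_apply_le' hx fun _ => zero_le
    · filter_upwards [h_lim] with x hx
      exact tendsto_of_tendsto_of_tendsto_of_le_of_le tendsto_const_nhds hx
        (fun _ => zero_le) fun i => Set.indicator_le_self (s i) (f i) x
  rw [lintegral_zero] at h_indicator
  refine h_indicator.congr' ?_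
  filter_upwards [hs] with i hsi using lintegral_indicator₀ hsi (f i)

theorem tendsto_tsum_setLIntegral_zero_of_dominated [Countable κ] {s : ι → κ → Set X}
    (bound : X → ℝ≥0∞) (hf : ∀ᶠ i in L, AEMeasurable (f i) μ)
    (hs : ∀ᶠ i in L, ∀ k, NullMeasurableSet (s i k) μ)
    (h_disj : ∀ᶠ i in L, Pairwise (Function.onFun (AEDisjoint μ) (s i)))
    (h_bound : ∀ᶠ i in L, ∀ᵐ x ∂μ, ∀ k, x ∈ s i k → f i x ≤ bound x)
    (h_fin : ∫⁻ x, bound x ∂μ ≠ ∞) (h_lim : ∀ᵐ x ∂μ, Tendsto (fun i => f i x) L (nhds 0)) :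
    Tendsto (fun i => ∑' k, ∫⁻ x in s i k, f i x ∂μ) L (nhds 0) := by
  have h_iUnion : Tendsto (fun i => ∫⁻ x in ⋃ k, s i k, f i x ∂μ) L (nhds 0) := by
    refine tendsto_setLIntegral_zero_of_dominated bound hf ?_ ?_ h_fin h_lim
    · filter_upwards [hs] with i hsi using .iUnion hsi
    · filter_upwards [h_bound] with i hi
      filter_upwards [hi] with x hx hxs
      obtain ⟨k, hk⟩ := Set.mem_iUnion.1 hxs
      exact hx k hk
  refine h_iUnion.congr' ?_
  filter_upwards [hs, h_disj] with i hsi hdi using lintegral_iUnion₀ hsi hdi (f i)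

end DominatedConvergence

theorem tendsto_div_sq_add_sq_atTop (t : ℝ) :
    Tendsto (fun l : ℝ => l / (l ^ 2 + t ^ 2)) atTop (nhds 0) := by
  refine squeeze_zero' ?_ ?_ tendsto_inv_atTop_zero
  · filter_upwards [eventually_ge_atTop 0] with l hl using by positivity
  · filter_upwards [eventually_gt_atTop 0] with l hl
    rw [div_le_iff₀ (by positivity), inv_mul_eq_div, le_div_iff₀ hl]
    nlinarith only [sq_nonneg t]

theorem div_sq_add_sq_le_two_mul_div {a l t : ℝ} (ha : 0 < a) (hat : a ≤ |t|)
    (htl : t ^ 2 ≤ a * l) : l / (l ^ 2 + t ^ 2) ≤ 2 * (a / (a ^ 2 + t ^ 2)) := by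
  have ha_sq : a ^ 2 ≤ t ^ 2 := by simpa only [sq_abs] using pow_le_pow_left₀ ha.le hat 2
  have ht : 0 < t ^ 2 := (pow_pos ha 2).trans_le ha_sq
  have hl : 0 < l := pos_of_mul_pos_right (ht.trans_le htl) ha.le
  calc l / (l ^ 2 + t ^ 2) ≤ l / l ^ 2 := by gcongr; exact le_add_of_nonneg_right ht.le
    _ = a / (a * l) := by field_simp
    _ ≤ a / t ^ 2 := by gcongr
    _ = 2 * (a / (t ^ 2 + t ^ 2)) := by field_simp; norm_num
    _ ≤ 2 * (a / (a ^ 2 + t ^ 2)) := by gcongr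

/-- The domain of integration of the `k`-th summand at the parameter `l`: the part of `{√2 A < B}`
where `|I| / A` has integer part `k + 1`, cut off at `(k + 2) |I| ≤ l`. The index is shifted, so
that `k : ℕ` stands for the summand `k + 1` of a sum starting at `1`. -/
def ratioShell {X : Type*} (A I B : X → ℝ) (l : ℝ) (k : ℕ) : Set X :=
  {z | Real.sqrt 2 * A z < B z ∧ ((k : ℝ) + 1) ≤ |I z| / A z ∧ |I z| / A z < (k : ℝ) + 2 ∧
    ((k : ℝ) + 2) * |I z| ≤ l}

namespace ratioShell

variable {X : Type*} {A I B : X → ℝ} {l : ℝ} {k : ℕ} {z : X}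

theorem floor_eq (hz : z ∈ ratioShell A I B l k) : ⌊|I z| / A z⌋₊ = k + 1 := by
  obtain ⟨-, h_lower, h_upper, -⟩ := hz
  refine (Nat.floor_eq_iff' k.succ_ne_zero).2 ⟨mod_cast h_lower, ?_⟩
  push_cast
  linarith only [h_upper]

theorem pairwise_disjoint (A I B : X → ℝ) (l : ℝ) :
    Pairwise (Function.onFun Disjoint (ratioShell A I B l)) := fun _ _ hjk =>
  Set.disjoint_left.2 fun _ hj hk =>
    hjk (Nat.succ_injective ((floor_eq hj).symm.trans (floor_eq hk)))

theorem nullMeasurableSet [MeasurableSpace X] {μ : Measure X} (hA : AEMeasurable A μ)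
    (hI : AEMeasurable I μ) (hB : AEMeasurable B μ) (l : ℝ) (k : ℕ) :
    NullMeasurableSet (ratioShell A I B l k) μ := by
  have hI_abs : AEMeasurable (fun z => |I z|) μ := by fun_prop
  have h_ratio : AEMeasurable (fun z => |I z| / A z) μ := hI_abs.div hA
  exact (nullMeasurableSet_lt (hA.const_mul _) hB).inter <|
    (nullMeasurableSet_le aemeasurable_const h_ratio).inter <|
    (nullMeasurableSet_lt h_ratio aemeasurable_const).inter <|
    nullMeasurableSet_le (hI_abs.const_mul _) aemeasurable_const

theorem le_abs (hA : 0 < A z) (hz : z ∈ ratioShell A I B l k) : A z ≤ |I z| :=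
  (one_le_div hA).1 <| (le_add_of_nonneg_left k.cast_nonneg).trans hz.2.1

theorem sq_le_mul (hA : 0 < A z) (hz : z ∈ ratioShell A I B l k) : I z ^ 2 ≤ A z * l := by
  obtain ⟨-, -, h_upper, h_cutoff⟩ := hz
  calc I z ^ 2 = |I z| * |I z| := by rw [← sq, sq_abs]
    _ ≤ ((k + 2) * A z) * |I z| := by gcongr; exact ((div_lt_iff₀ hA).1 h_upper).le
    _ = A z * ((k + 2) * |I z|) := by ring
    _ ≤ A z * l := by gcongr

theorem div_sq_add_sq_le (hA : 0 < A z) (hz : z ∈ ratioShell A I B l k) :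
    l / (l ^ 2 + I z ^ 2) ≤ 2 * (A z / (A z ^ 2 + I z ^ 2)) :=
  div_sq_add_sq_le_two_mul_div hA (le_abs hA hz) (sq_le_mul hA hz)

end ratioShell

theorem stmt_5_general {X : Type*} [MeasurableSpace X] {μ : Measure X} {A I B g : X → ℝ}
    (hA : AEMeasurable A μ) (hI : AEMeasurable I μ) (hA0 : ∀ᵐ z ∂μ, 0 < A z)
    (hB : ∀ z, B z = Real.sqrt (A z ^ 2 + I z ^ 2)) (hg : AEMeasurable g μ) (hg0 : 0 ≤ᵐ[μ] g)
    (hfin : ∫⁻ z, ENNReal.ofReal (A z / B z ^ 2 * g z) ∂μ < ⊤) :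
    Tendsto (fun l : ℝ => ∑' k : ℕ,
        ∫⁻ z in ratioShell A I B l k, ENNReal.ofReal (l / (l ^ 2 + I z ^ 2) * g z) ∂μ)
      atTop (nhds 0) := by
  have hB_meas : AEMeasurable B μ := by rw [funext hB]; fun_prop
  have hB_sq (z : X) : B z ^ 2 = A z ^ 2 + I z ^ 2 := by rw [hB, Real.sq_sqrt (by positivity)]
  refine tendsto_tsum_setLIntegral_zero_of_dominated
    (fun z => ENNReal.ofReal 2 * ENNReal.ofReal (A z / B z ^ 2 * g z))
    (.of_forall fun l => by fun_prop)
    (.of_forall fun l => ratioShell.nullMeasurableSet hA hI hB_meas l)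
    (.of_forall fun l => (ratioShell.pairwise_disjoint A I B l).mono fun _ _ h => h.aedisjoint)
    (.of_forall fun l => ?_) ?_ (.of_forall fun z => ?_)
  · filter_upwards [hA0, hg0] with z hAz hgz k hz
    rw [← ENNReal.ofReal_mul zero_le_two, ← mul_assoc, hB_sq]
    exact ENNReal.ofReal_le_ofReal
      (mul_le_mul_of_nonneg_right (ratioShell.div_sq_add_sq_le hAz hz) hgz)
  · rw [lintegral_const_mul' _ _ ENNReal.ofReal_ne_top]
    exact ENNReal.mul_ne_top ENNReal.ofReal_ne_top hfin.ne
  · simpa only [zero_mul, ENNReal.ofReal_zero] using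
      ENNReal.tendsto_ofReal ((tendsto_div_sq_add_sq_atTop (I z)).mul_const (g z))

/-- The dominated-convergence step in the proof of Lemma 4.2: with `A ≥ 1`,
`B := √(A² + I²)` and `g ≥ 0` satisfying `∫ A B⁻² g < ∞`, one has
`lim_{λ→∞} Σ_{k≥1} ∫_{B > √2 A, k ≤ |I|/A < k+1, λ ≥ (k+1)|I|}
  λ (λ² + I²)⁻¹ g dz = 0`. -/
theorem stmt_5 (n : ℕ) (hn : 1 ≤ n)
    (A I : EuclideanSpace ℝ (Fin n) → ℝ) (hA : Measurable A) (hI : Measurable I)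
    (hA1 : ∀ z, 1 ≤ A z)
    (B : EuclideanSpace ℝ (Fin n) → ℝ)
    (hB : ∀ z, B z = Real.sqrt (A z ^ 2 + I z ^ 2))
    (g : EuclideanSpace ℝ (Fin n) → ℝ) (hg : Measurable g) (hg0 : ∀ z, 0 ≤ g z)
    (hfin : ∫⁻ z, ENNReal.ofReal (A z / B z ^ 2 * g z) < ⊤) :
    Tendsto (fun l : ℝ => ∑' k : ℕ,
        ∫⁻ z in {z | Real.sqrt 2 * A z < B z ∧
            ((k : ℝ) + 1) ≤ |I z| / A z ∧ |I z| / A z < (k : ℝ) + 2 ∧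
            ((k : ℝ) + 2) * |I z| ≤ l},
          ENNReal.ofReal (l / (l ^ 2 + I z ^ 2) * g z))
      atTop (nhds 0) :=
  stmt_5_general hA.aemeasurable hI.aemeasurable
    (.of_forall fun z => one_pos.trans_le (hA1 z)) hB hg.aemeasurable (.of_forall hg0) hfin
end

section
/- Let α ∈ (0,1), δ > 0, c₁ > 0, and let μ be a Borel measure on (0,∞) such that μ ≥ c₁·x^{−1−α}dx on (0,δ). Then there exist constants c′ > 0 and K > 0 such that for all z ∈ ℝ: ∫_{(0,∞)} (1 − cos(zx)) μ(dx) ≥ c′|z|^α − K. -/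
open MeasureTheory

/-!
For `x ∈ (r / 2, r)` with `r = π / |z|`, the angle `|z| * x` lies in `(π / 2, π)`, so
`1 - cos (z * x) ≥ 1` and the integral is at least `μ (r / 2, r)`. If `r < δ`, the density
`c₁ * x ^ (-1 - α)`, being decreasing, gives this interval mass at least
`(r / 2) * c₁ * r ^ (-1 - α) = (c₁ / 2) * r ^ (-α)`, which is proportional to `|z| ^ α`.
If `r ≥ δ`, then `|z|` is at most `π / δ`, and `K` absorbs `c' * |z| ^ α`.
-/

theorem mul_measure_Ioo_le_setLIntegral_of_antitoneOn {X : Type*} [TopologicalSpace X]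
    [LinearOrder X] [OrderClosedTopology X] [MeasurableSpace X] [OpensMeasurableSpace X]
    (ν : Measure X) {f : X → ENNReal} {a b : X} (hf : AntitoneOn f (Set.Ioc a b)) :
    f b * ν (Set.Ioo a b) ≤ ∫⁻ x in Set.Ioo a b, f x ∂ν := by
  rw [← setLIntegral_const]
  refine setLIntegral_mono' measurableSet_Ioo fun x hx => ?_
  exact hf (Set.Ioo_subset_Ioc_self hx) (Set.right_mem_Ioc.2 (hx.1.trans hx.2)) hx.2.le

theorem ofReal_rpow_neg_le_setLIntegral_Ioo_half {α c r : ℝ} (hα : -1 ≤ α) (hc : 0 ≤ c)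
    (hr : 0 < r) :
    ENNReal.ofReal (c / 2 * r ^ (-α)) ≤
      ∫⁻ x in Set.Ioo (r / 2) r, ENNReal.ofReal (c * x ^ (-1 - α)) := by
  have density_antitone :
      AntitoneOn (fun x : ℝ => ENNReal.ofReal (c * x ^ (-1 - α))) (Set.Ioc (r / 2) r) := by
    intro x hx y _ hxy
    have hx_pos : 0 < x := (half_pos hr).trans hx.1
    exact ENNReal.ofReal_le_ofReal <| mul_le_mul_of_nonneg_left
      (Real.rpow_le_rpow_of_nonpos hx_pos hxy (by linarith)) hc
  have rpow_neg_eq : r ^ (-α) = r ^ (-1 - α) * r := by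
    rw [← Real.rpow_add_one hr.ne']
    ring_nf
  calc ENNReal.ofReal (c / 2 * r ^ (-α))
      = ENNReal.ofReal (c * r ^ (-1 - α)) * volume (Set.Ioo (r / 2) r) := by
        rw [Real.volume_Ioo, ← ENNReal.ofReal_mul (by positivity), rpow_neg_eq]
        ring_nf
    _ ≤ _ := mul_measure_Ioo_le_setLIntegral_of_antitoneOn volume density_antitone

theorem cos_mul_nonpos_of_mem_Ioo {z x : ℝ} (hz : z ≠ 0)
    (hx : x ∈ Set.Ioo (Real.pi / |z| / 2) (Real.pi / |z|)) : Real.cos (z * x) ≤ 0 := by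
  have hz_pos : 0 < |z| := abs_pos.2 hz
  have hx_pos : 0 < x := lt_trans (by positivity) hx.1
  have lower : Real.pi / 2 < |z| * x := by
    rw [← div_lt_iff₀' hz_pos, div_right_comm]
    exact hx.1
  have upper : |z| * x < Real.pi := (lt_div_iff₀' hz_pos).1 hx.2
  rw [← Real.cos_abs, abs_mul, abs_of_pos hx_pos]
  exact Real.cos_nonpos_of_pi_div_two_le_of_le lower.le (by linarith [Real.pi_pos])

theorem measure_Ioo_le_lintegral_one_sub_cos (μ : Measure ℝ) {z : ℝ} (hz : z ≠ 0) :
    μ (Set.Ioo (Real.pi / |z| / 2) (Real.pi / |z|)) ≤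
      ∫⁻ x in Set.Ioi (0 : ℝ), ENNReal.ofReal (1 - Real.cos (z * x)) ∂μ := by
  have left_nonneg : 0 ≤ Real.pi / |z| / 2 := by positivity
  calc μ (Set.Ioo (Real.pi / |z| / 2) (Real.pi / |z|))
      = ∫⁻ _ in Set.Ioo (Real.pi / |z| / 2) (Real.pi / |z|), 1 ∂μ := (setLIntegral_one _).symm
    _ ≤ ∫⁻ x in Set.Ioo (Real.pi / |z| / 2) (Real.pi / |z|),
          ENNReal.ofReal (1 - Real.cos (z * x)) ∂μ := by
        refine setLIntegral_mono' measurableSet_Ioo fun x hx => ENNReal.one_le_ofReal.2 ?_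
        linarith [cos_mul_nonpos_of_mem_Ioo hz hx]
    _ ≤ _ := lintegral_mono_set fun x hx => left_nonneg.trans_lt hx.1

theorem ofReal_sub_le_lintegral_one_sub_cos_of_le_measure_Ioo_half {α δ κ : ℝ} (hα : 0 ≤ α)
    (hδ : 0 < δ) (hκ : 0 ≤ κ) {μ : Measure ℝ}
    (hμ : ∀ r ∈ Set.Ioo 0 δ, ENNReal.ofReal (κ * r ^ (-α)) ≤ μ (Set.Ioo (r / 2) r)) (z : ℝ) :
    ENNReal.ofReal (κ * (|z| / Real.pi) ^ α - κ * (1 / δ) ^ α) ≤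
      ∫⁻ x in Set.Ioi (0 : ℝ), ENNReal.ofReal (1 - Real.cos (z * x)) ∂μ := by
  have hπ : 0 < Real.pi := Real.pi_pos
  rcases le_or_gt (|z| / Real.pi) (1 / δ) with low_freq | high_freq
  · have rpow_le : (|z| / Real.pi) ^ α ≤ (1 / δ) ^ α :=
      Real.rpow_le_rpow (by positivity) low_freq hα
    rw [ENNReal.ofReal_of_nonpos (sub_nonpos.2 (mul_le_mul_of_nonneg_left rpow_le hκ))]
    exact zero_le
  · have hz_pos : 0 < |z| := (div_pos_iff_of_pos_right hπ).1 ((one_div_pos.2 hδ).trans high_freq)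
    have scale_lt : Real.pi / |z| < δ := by
      simpa only [one_div_div] using (one_div_lt hδ (div_pos hz_pos hπ)).1 high_freq
    have rpow_eq : (|z| / Real.pi) ^ α = (Real.pi / |z|) ^ (-α) := by
      rw [Real.rpow_neg_eq_inv_rpow, inv_div]
    calc ENNReal.ofReal (κ * (|z| / Real.pi) ^ α - κ * (1 / δ) ^ α)
        ≤ ENNReal.ofReal (κ * (Real.pi / |z|) ^ (-α)) := by
          rw [← rpow_eq]
          exact ENNReal.ofReal_le_ofReal (sub_le_self _ (by positivity))
      _ ≤ μ (Set.Ioo (Real.pi / |z| / 2) (Real.pi / |z|)) := hμ _ ⟨by positivity, scale_lt⟩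
      _ ≤ _ := measure_Ioo_le_lintegral_one_sub_cos μ (abs_pos.1 hz_pos)

theorem stmt_8_general (α δ c₁ : ℝ) (hα : 0 ≤ α) (hδ : 0 < δ) (hc₁ : 0 < c₁) (μ : Measure ℝ)
    (hdom : ∀ E : Set ℝ, MeasurableSet E → E ⊆ Set.Ioo 0 δ →
      ∫⁻ x in E, ENNReal.ofReal (c₁ * x ^ (-1 - α)) ≤ μ E) :
    ∃ c' > (0 : ℝ), ∃ K > (0 : ℝ), ∀ z : ℝ,
      ENNReal.ofReal (c' * |z| ^ α - K)
        ≤ ∫⁻ x in Set.Ioi (0 : ℝ), ENNReal.ofReal (1 - Real.cos (z * x)) ∂μ := by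
  have hπ : 0 < Real.pi := Real.pi_pos
  have mass_lower_bound : ∀ r ∈ Set.Ioo 0 δ,
      ENNReal.ofReal (c₁ / 2 * r ^ (-α)) ≤ μ (Set.Ioo (r / 2) r) := fun r hr =>
    (ofReal_rpow_neg_le_setLIntegral_Ioo_half (by linarith) hc₁.le hr.1).trans <|
      hdom _ measurableSet_Ioo (Set.Ioo_subset_Ioo (half_pos hr.1).le hr.2.le)
  refine ⟨c₁ / 2 / Real.pi ^ α, by positivity, c₁ / 2 * (1 / δ) ^ α, by positivity, fun z => ?_⟩
  rw [div_mul_eq_mul_div, mul_div_assoc, ← Real.div_rpow (abs_nonneg z) hπ.le]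
  exact ofReal_sub_le_lintegral_one_sub_cos_of_le_measure_Ioo_half hα hδ (by positivity)
    mass_lower_bound z

/-- Lower bound (pro5.4-a) on the real part of the Lévy–Khintchine exponent of a
locally quasi-stable subordinator: if `μ ≥ c₁ x^{-1-α} dx` on `(0,δ)`, then there
are `c' > 0`, `K > 0` with `∫_{(0,∞)} (1 - cos(z x)) μ(dx) ≥ c' |z|^α - K` for all `z`. -/
theorem stmt_8 (α δ c₁ : ℝ) (hα : α ∈ Set.Ioo (0 : ℝ) 1) (hδ : 0 < δ) (hc₁ : 0 < c₁)
    (μ : Measure ℝ)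
    (hdom : ∀ E : Set ℝ, MeasurableSet E → E ⊆ Set.Ioo 0 δ →
      ∫⁻ x in E, ENNReal.ofReal (c₁ * x ^ (-1 - α)) ≤ μ E) :
    ∃ c' > (0 : ℝ), ∃ K > (0 : ℝ), ∀ z : ℝ,
      ENNReal.ofReal (c' * |z| ^ α - K)
        ≤ ∫⁻ x in Set.Ioi (0 : ℝ), ENNReal.ofReal (1 - Real.cos (z * x)) ∂μ :=
  stmt_8_general α δ c₁ hα.1.le hδ hc₁ μ hdom
end

section
/- Let α ∈ (0,1), δ > 0, c₂ > 0, let μ₂ be a finite Borel measure on (0,δ), and let μ be a Borel measure on (0,∞) with μ([δ,∞)) < ∞ and μ ≤ c₂·x^{−1−α}dx + μ₂ on (0,δ). Then there exist constants c″ > 0 and K > 0 such that for all z ∈ ℝ: ∫_{(0,∞)} |sin(zx)| μ(dx) ≤ c″|z|^α + K. -/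
/-! Since `|sin (z x)| ≤ min 1 |z x|`, everything reduces to the measure `c x ^ (-1 - α) dx`, for
which cutting at `x = 1 / |z|` leaves a truncated first moment, `|z|` times a multiple of
`|z| ^ (α - 1)`, and a tail, a multiple of `|z| ^ α`. The finite measure `μ₂` and the mass of `μ`
on `[δ, ∞)` contribute at most a constant because `|sin| ≤ 1`. -/

open MeasureTheory

section Domination

variable {X : Type*} [MeasurableSpace X] {μ ν ρ : Measure X} {s t : Set X}

theorem restrict_le_of_forall_subset (hs : MeasurableSet s)
    (h : ∀ E, MeasurableSet E → E ⊆ s → μ E ≤ ν E) : μ.restrict s ≤ ν := by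
  refine Measure.le_iff.2 fun E hE => ?_
  rw [Measure.restrict_apply hE]
  exact (h _ (hE.inter hs) Set.inter_subset_right).trans (measure_mono Set.inter_subset_left)

theorem lintegral_union_le_of_restrict_le_add {f : X → ENNReal} (hf : ∀ x, f x ≤ 1)
    (h : μ.restrict s ≤ ν + ρ) :
    ∫⁻ x in s ∪ t, f x ∂μ ≤ ∫⁻ x, f x ∂ν + (ρ Set.univ + μ t) := by
  have lintegral_le_mass (m : Measure X) : ∫⁻ x, f x ∂m ≤ m Set.univ :=
    (lintegral_mono hf).trans_eq lintegral_one
  calc ∫⁻ x in s ∪ t, f x ∂μ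
      ≤ ∫⁻ x in s, f x ∂μ + ∫⁻ x in t, f x ∂μ := lintegral_union_le _ _ _
    _ ≤ ∫⁻ x, f x ∂(ν + ρ) + μ t := by
        gcongr
        exact (lintegral_le_mass _).trans_eq (Measure.restrict_apply_univ t)
    _ ≤ ∫⁻ x, f x ∂ν + (ρ Set.univ + μ t) := by
        rw [lintegral_add_measure, add_assoc]
        gcongr
        exact lintegral_le_mass ρ

end Domination

/-- The Lévy measure `c x ^ (-1 - α) dx` on `(0, ∞)` of an `α`-stable subordinator, as a measure
on `ℝ` that vanishes on `(-∞, 0]`. -/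
noncomputable def stableLevyMeasure (c α : ℝ) : Measure ℝ :=
  (volume.restrict (Set.Ioi 0)).withDensity fun x => ENNReal.ofReal (c * x ^ (-1 - α))

namespace stableLevyMeasure

variable {c α b : ℝ}

theorem restrict_of_subset_Ioi {E : Set ℝ} (hE : MeasurableSet E) (hpos : E ⊆ Set.Ioi 0) :
    (stableLevyMeasure c α).restrict E =
      (volume.restrict E).withDensity fun x => ENNReal.ofReal (c * x ^ (-1 - α)) := by
  rw [stableLevyMeasure, restrict_withDensity hE, Measure.restrict_restrict_of_subset hpos]

theorem apply_of_subset_Ioi {E : Set ℝ} (hE : MeasurableSet E) (hpos : E ⊆ Set.Ioi 0) :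
    stableLevyMeasure c α E = ∫⁻ x in E, ENNReal.ofReal (c * x ^ (-1 - α)) := by
  rw [← Measure.restrict_apply_univ, restrict_of_subset_Ioi hE hpos,
    withDensity_apply _ MeasurableSet.univ, Measure.restrict_univ]

theorem lintegral_eq_setLIntegral_Ioi (f : ℝ → ENNReal) :
    ∫⁻ x, f x ∂stableLevyMeasure c α = ∫⁻ x in Set.Ioi 0, f x ∂stableLevyMeasure c α := by
  rw [restrict_of_subset_Ioi measurableSet_Ioi subset_rfl, stableLevyMeasure]

theorem apply_Ioi (hc : 0 ≤ c) (hα : 0 < α) (hb : 0 < b) :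
    stableLevyMeasure c α (Set.Ioi b) = ENNReal.ofReal (c * b ^ (-α) / α) := by
  have integrable : IntegrableOn (fun x : ℝ => c * x ^ (-1 - α)) (Set.Ioi b) :=
    (integrableOn_Ioi_rpow_of_lt (by linarith) hb).const_mul c
  have nonneg : ∀ x ∈ Set.Ioi b, 0 ≤ c * x ^ (-1 - α) := fun x hx =>
    mul_nonneg hc (Real.rpow_nonneg (hb.trans hx).le _)
  rw [apply_of_subset_Ioi measurableSet_Ioi (Set.Ioi_subset_Ioi hb.le),
    ← ofReal_integral_eq_lintegral_ofReal integrable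
      (ae_restrict_of_forall_mem measurableSet_Ioi nonneg),
    integral_const_mul, integral_Ioi_rpow_of_lt (by linarith) hb,
    show -1 - α + 1 = -α by ring, neg_div_neg_eq, mul_div_assoc]

theorem lintegral_Ioc_ofReal (hc : 0 ≤ c) (hα : α < 1) (hb : 0 ≤ b) :
    ∫⁻ x in Set.Ioc 0 b, ENNReal.ofReal x ∂stableLevyMeasure c α =
      ENNReal.ofReal (c * b ^ (1 - α) / (1 - α)) := by
  have integrable : IntegrableOn (fun x : ℝ => c * x ^ (-α)) (Set.Ioc 0 b) :=
    (intervalIntegrable_iff_integrableOn_Ioc_of_le hb).1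
      ((intervalIntegral.intervalIntegrable_rpow' (by linarith)).const_mul c)
  have nonneg : ∀ x ∈ Set.Ioc 0 b, 0 ≤ c * x ^ (-α) := fun x hx =>
    mul_nonneg hc (Real.rpow_nonneg hx.1.le _)
  have density_mul : ∀ x ∈ Set.Ioc 0 b,
      ENNReal.ofReal (c * x ^ (-1 - α)) * ENNReal.ofReal x = ENNReal.ofReal (c * x ^ (-α)) := by
    intro x hx
    rw [← ENNReal.ofReal_mul' hx.1.le, mul_assoc, ← Real.rpow_add_one hx.1.ne',
      show -1 - α + 1 = -α by ring]
  rw [restrict_of_subset_Ioi measurableSet_Ioc Set.Ioc_subset_Ioi_self,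
    lintegral_withDensity_eq_lintegral_mul _ (by fun_prop) (by fun_prop)]
  simp only [Pi.mul_apply]
  rw [setLIntegral_congr_fun measurableSet_Ioc density_mul,
    ← ofReal_integral_eq_lintegral_ofReal integrable
      (ae_restrict_of_forall_mem measurableSet_Ioc nonneg),
    integral_const_mul, ← intervalIntegral.integral_of_le hb, integral_rpow (Or.inl (by linarith)),
    Real.zero_rpow (by linarith), neg_add_eq_sub, sub_zero, mul_div_assoc]

theorem lintegral_min_one_abs_mul (hc : 0 ≤ c) (hα : α ∈ Set.Ioo (0 : ℝ) 1) (z : ℝ) :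
    ∫⁻ x, ENNReal.ofReal (min 1 |z * x|) ∂stableLevyMeasure c α =
      ENNReal.ofReal (c / (α * (1 - α)) * |z| ^ α) := by
  obtain ⟨hα₀, hα₁⟩ := hα
  obtain rfl | hz := eq_or_ne z 0
  · simp [Real.zero_rpow hα₀.ne']
  have hz' : 0 < |z| := abs_pos.2 hz
  have : 0 < 1 - α := sub_pos.2 hα₁
  have near_zero : ∀ x ∈ Set.Ioc 0 |z|⁻¹,
      ENNReal.ofReal (min 1 |z * x|) = ENNReal.ofReal |z| * ENNReal.ofReal x := by
    intro x hx
    rw [← ENNReal.ofReal_mul hz'.le, abs_mul, abs_of_pos hx.1,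
      min_eq_right ((le_inv_mul_iff₀ hz').1 (by simpa using hx.2))]
  have away_from_zero : ∀ x ∈ Set.Ioi |z|⁻¹, ENNReal.ofReal (min 1 |z * x|) = 1 := by
    intro x hx
    have : 1 ≤ |z * x| := by
      rw [abs_mul, ← inv_le_iff_one_le_mul₀' hz']
      exact (Set.mem_Ioi.1 hx).le.trans (le_abs_self x)
    rw [min_eq_left this, ENNReal.ofReal_one]
  calc ∫⁻ x, ENNReal.ofReal (min 1 |z * x|) ∂stableLevyMeasure c α
      = ENNReal.ofReal |z| * ∫⁻ x in Set.Ioc 0 |z|⁻¹, ENNReal.ofReal x ∂stableLevyMeasure c α +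
          stableLevyMeasure c α (Set.Ioi |z|⁻¹) := by
        rw [lintegral_eq_setLIntegral_Ioi, ← Set.Ioc_union_Ioi_eq_Ioi (inv_pos.2 hz').le,
          lintegral_union measurableSet_Ioi (Set.Ioc_disjoint_Ioi le_rfl),
          setLIntegral_congr_fun measurableSet_Ioc near_zero,
          setLIntegral_congr_fun measurableSet_Ioi away_from_zero, setLIntegral_one,
          lintegral_const_mul _ (by fun_prop)]
    _ = ENNReal.ofReal
          (|z| * (c * |z|⁻¹ ^ (1 - α) / (1 - α)) + c * |z|⁻¹ ^ (-α) / α) := by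
        rw [lintegral_Ioc_ofReal hc hα₁ (inv_pos.2 hz').le, apply_Ioi hc hα₀ (inv_pos.2 hz'),
          ← ENNReal.ofReal_mul hz'.le, ← ENNReal.ofReal_add (by positivity) (by positivity)]
    _ = ENNReal.ofReal (c / (α * (1 - α)) * |z| ^ α) := by
        rw [Real.inv_rpow hz'.le, Real.inv_rpow hz'.le, ← Real.rpow_neg hz'.le (-α), neg_neg,
          Real.rpow_sub hz', Real.rpow_one]
        congr 1
        field_simp
        ring

theorem lintegral_Ioi_min_one_abs_mul_le_of_restrict_le {μ ρ : Measure ℝ} {δ : ℝ} (hc : 0 ≤ c)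
    (hα : α ∈ Set.Ioo (0 : ℝ) 1) (h : μ.restrict (Set.Ioo 0 δ) ≤ stableLevyMeasure c α + ρ)
    (z : ℝ) :
    ∫⁻ x in Set.Ioi 0, ENNReal.ofReal (min 1 |z * x|) ∂μ ≤
      ENNReal.ofReal (c / (α * (1 - α)) * |z| ^ α) + (ρ Set.univ + μ (Set.Ici δ)) := by
  rw [← lintegral_min_one_abs_mul hc hα]
  exact (lintegral_mono_set Set.Ioi_subset_Ioo_union_Ici).trans
    (lintegral_union_le_of_restrict_le_add
      (fun _ => ENNReal.ofReal_le_one.2 (min_le_left _ _)) h)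

end stableLevyMeasure

/-- Upper bound (pro5.4-b) on the imaginary part of the Lévy–Khintchine exponent
of a locally quasi-stable subordinator: if `μ([δ,∞)) < ∞` and
`μ ≤ c₂ x^{-1-α} dx + μ₂` on `(0,δ)` with `μ₂` a finite measure on `(0,δ)`, then
there are `c'' > 0`, `K > 0` with
`∫_{(0,∞)} |sin(z x)| μ(dx) ≤ c'' |z|^α + K` for all `z`. -/
theorem stmt_9 (α δ c₂ : ℝ) (hα : α ∈ Set.Ioo (0 : ℝ) 1) (hδ : 0 < δ) (hc₂ : 0 < c₂)
    (μ μ₂ : Measure ℝ) [IsFiniteMeasure μ₂] (hμ₂supp : μ₂ (Set.Ioo 0 δ)ᶜ = 0)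
    (hfin : μ (Set.Ici δ) < ⊤)
    (hdom : ∀ E : Set ℝ, MeasurableSet E → E ⊆ Set.Ioo 0 δ →
      μ E ≤ (∫⁻ x in E, ENNReal.ofReal (c₂ * x ^ (-1 - α))) + μ₂ E) :
    ∃ c'' > (0 : ℝ), ∃ K > (0 : ℝ), ∀ z : ℝ,
      ∫⁻ x in Set.Ioi (0 : ℝ), ENNReal.ofReal |Real.sin (z * x)| ∂μ
        ≤ ENNReal.ofReal (c'' * |z| ^ α + K) := by
  have hC : 0 < c₂ / (α * (1 - α)) := div_pos hc₂ (mul_pos hα.1 (sub_pos.2 hα.2))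
  have dominated : μ.restrict (Set.Ioo 0 δ) ≤ stableLevyMeasure c₂ α + μ₂ := by
    refine restrict_le_of_forall_subset measurableSet_Ioo fun E hE hEδ => ?_
    rw [Measure.add_apply,
      stableLevyMeasure.apply_of_subset_Ioi hE (hEδ.trans Set.Ioo_subset_Ioi_self)]
    exact hdom E hE hEδ
  set M := μ₂ Set.univ + μ (Set.Ici δ)
  have M_finite : M ≠ ⊤ := ENNReal.add_ne_top.2 ⟨measure_ne_top _ _, hfin.ne⟩
  refine ⟨_, hC, M.toReal + 1, by positivity, fun z => ?_⟩
  calc ∫⁻ x in Set.Ioi 0, ENNReal.ofReal |Real.sin (z * x)| ∂μ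
      ≤ ∫⁻ x in Set.Ioi 0, ENNReal.ofReal (min 1 |z * x|) ∂μ := by
        gcongr with x
        exact le_min (Real.abs_sin_le_one _) Real.abs_sin_le_abs
    _ ≤ ENNReal.ofReal (c₂ / (α * (1 - α)) * |z| ^ α) + M :=
        stableLevyMeasure.lintegral_Ioi_min_one_abs_mul_le_of_restrict_le hc₂.le hα dominated z
    _ = ENNReal.ofReal (c₂ / (α * (1 - α)) * |z| ^ α + M.toReal) := by
        rw [ENNReal.ofReal_add (by positivity) ENNReal.toReal_nonneg,
          ENNReal.ofReal_toReal M_finite]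
    _ ≤ ENNReal.ofReal (c₂ / (α * (1 - α)) * |z| ^ α + (M.toReal + 1)) :=
        ENNReal.ofReal_le_ofReal (by linarith)
end

section
/- Let α ∈ (0,1), 0 < δ < 1, c₁ > 0, and let μ be a Borel measure on (0,∞) such that μ ≥ c₁·(−log x)^{-1}·x^{−1−α}dx on (0,δ). Then there exist constants c″ > 0 and K > 0 such that for all z ∈ ℝ with |z| > 1: ∫_{(0,∞)} (1 − cos(zx)) μ(dx) ≥ c″·|z|^α / log(2|z|) − K. -/
open MeasureTheory

/-!
With `r = |z|`, the integrand `1 - cos (z x)` is at least `1 - cos (1/2)` on the interval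
`((2r)⁻¹, r⁻¹)`. There the density is at least `c / (log (2r) * (r⁻¹) ^ (1 + α))`, and the interval
has length `(2r)⁻¹`, which already gives a multiple of `r ^ α / log (2r)`. The interval lies in
`(0, δ)` once `δ⁻¹ ≤ r`; on the remaining bounded range of `r` the constant `K` makes the lower
bound nonpositive.
-/

lemma ofReal_one_sub_cos_mul_measure_Ioo_le (μ : Measure ℝ) {a b z : ℝ} (ha : 0 ≤ a)
    (hb : |z| * b ≤ Real.pi) :
    ENNReal.ofReal (1 - Real.cos (z * a)) * μ (Set.Ioo a b) ≤
      ∫⁻ x in Set.Ioi (0 : ℝ), ENNReal.ofReal (1 - Real.cos (z * x)) ∂μ := by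
  have cos_abs_mul {x : ℝ} (hx : 0 ≤ x) : Real.cos (z * x) = Real.cos (|z| * x) := by
    rw [← Real.cos_abs, abs_mul, abs_of_nonneg hx]
  have cos_le : ∀ x ∈ Set.Ioo a b, Real.cos (z * x) ≤ Real.cos (z * a) := by
    rintro x ⟨hax, hxb⟩
    rw [cos_abs_mul ha, cos_abs_mul (ha.trans hax.le)]
    apply Real.cos_le_cos_of_nonneg_of_le_pi (by positivity)
    · exact (mul_le_mul_of_nonneg_left hxb.le (abs_nonneg z)).trans hb
    · gcongr
  calc
    _ = ∫⁻ _ in Set.Ioo a b, ENNReal.ofReal (1 - Real.cos (z * a)) ∂μ :=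
      (setLIntegral_const ..).symm
    _ ≤ ∫⁻ x in Set.Ioo a b, ENNReal.ofReal (1 - Real.cos (z * x)) ∂μ :=
      setLIntegral_mono' measurableSet_Ioo fun x hx ↦
        ENNReal.ofReal_le_ofReal (sub_le_sub_left (cos_le x hx) 1)
    _ ≤ _ := lintegral_mono_set fun _ hx ↦ ha.trans_lt hx.1

lemma div_neg_log_mul_rpow_le {α c a b x : ℝ} (hα : -1 ≤ α) (hc : 0 ≤ c) (ha : 0 < a)
    (hb : b ≤ 1) (hx : x ∈ Set.Ioo a b) :
    c / (-Real.log a * b ^ (1 + α)) ≤ c / (-Real.log x * x ^ (1 + α)) := by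
  obtain ⟨hax, hxb⟩ := hx
  have hx0 : 0 < x := ha.trans hax
  have neg_log_pos : 0 < -Real.log x := neg_pos.2 (Real.log_neg hx0 (hxb.trans_le hb))
  have neg_log_le : -Real.log x ≤ -Real.log a := neg_le_neg (Real.log_le_log ha hax.le)
  have rpow_le : x ^ (1 + α) ≤ b ^ (1 + α) := Real.rpow_le_rpow hx0.le hxb.le (by linarith)
  gcongr
  exact neg_log_pos.le.trans neg_log_le

lemma ofReal_rpow_div_log_le_setLIntegral_Ioo {α c r : ℝ} (hα : -1 ≤ α) (hc : 0 ≤ c)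
    (hr : 1 ≤ r) :
    ENNReal.ofReal (c / 2 * (r ^ α / Real.log (2 * r))) ≤
      ∫⁻ x in Set.Ioo (2 * r)⁻¹ r⁻¹,
        ENNReal.ofReal (c / (-Real.log x * x ^ (1 + α))) := by
  have hr0 : 0 < r := zero_lt_one.trans_le hr
  have density_mul_length : c / 2 * (r ^ α / Real.log (2 * r)) =
      c / (-Real.log (2 * r)⁻¹ * r⁻¹ ^ (1 + α)) * (r⁻¹ - (2 * r)⁻¹) := by
    rw [Real.log_inv, neg_neg, Real.inv_rpow hr0.le, Real.rpow_add hr0, Real.rpow_one]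
    field
  calc
    _ = ∫⁻ _ in Set.Ioo (2 * r)⁻¹ r⁻¹,
          ENNReal.ofReal (c / (-Real.log (2 * r)⁻¹ * r⁻¹ ^ (1 + α))) := by
      rw [setLIntegral_const, Real.volume_Ioo, density_mul_length,
        ENNReal.ofReal_mul' (sub_nonneg.2 (by gcongr; linarith))]
    _ ≤ _ := setLIntegral_mono' measurableSet_Ioo fun x hx ↦ ENNReal.ofReal_le_ofReal
      (div_neg_log_mul_rpow_le hα hc (by positivity) (inv_le_one_of_one_le₀ hr) hx)

lemma ofReal_rpow_div_log_le_lintegral_one_sub_cos {α δ c z : ℝ} (hα : -1 ≤ α) (hδ0 : 0 < δ)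
    (hδ1 : δ ≤ 1) (hc : 0 ≤ c) {μ : Measure ℝ}
    (hdom : ∀ E : Set ℝ, MeasurableSet E → E ⊆ Set.Ioo 0 δ →
      ∫⁻ x in E, ENNReal.ofReal (c / ((-Real.log x) * x ^ (1 + α))) ≤ μ E)
    (hz : δ⁻¹ ≤ |z|) :
    ENNReal.ofReal ((1 - Real.cos (1 / 2)) * (c / 2) * (|z| ^ α / Real.log (2 * |z|))) ≤
      ∫⁻ x in Set.Ioi (0 : ℝ), ENNReal.ofReal (1 - Real.cos (z * x)) ∂μ := by
  have hz1 : 1 ≤ |z| := ((one_le_inv₀ hδ0).2 hδ1).trans hz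
  have hz0 : 0 < |z| := zero_lt_one.trans_le hz1
  have interval_subset : Set.Ioo (2 * |z|)⁻¹ |z|⁻¹ ⊆ Set.Ioo 0 δ :=
    Set.Ioo_subset_Ioo (by positivity) (inv_le_of_inv_le₀ hδ0 hz)
  have cos_left_endpoint : Real.cos (z * (2 * |z|)⁻¹) = Real.cos (1 / 2) := by
    rw [← Real.cos_abs, abs_mul, abs_of_pos (show 0 < (2 * |z|)⁻¹ by positivity)]
    congr 1
    field
  calc
    _ = ENNReal.ofReal (1 - Real.cos (z * (2 * |z|)⁻¹)) *
          ENNReal.ofReal (c / 2 * (|z| ^ α / Real.log (2 * |z|))) := by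
      rw [cos_left_endpoint, mul_assoc, ENNReal.ofReal_mul (sub_nonneg.2 (Real.cos_le_one _))]
    _ ≤ ENNReal.ofReal (1 - Real.cos (z * (2 * |z|)⁻¹)) * μ (Set.Ioo (2 * |z|)⁻¹ |z|⁻¹) := by
      gcongr
      exact (ofReal_rpow_div_log_le_setLIntegral_Ioo hα hc hz1).trans
        (hdom _ measurableSet_Ioo interval_subset)
    _ ≤ _ := ofReal_one_sub_cos_mul_measure_Ioo_le μ (by positivity) (by
      rw [mul_inv_cancel₀ hz0.ne']
      linarith [Real.pi_gt_three])

lemma rpow_div_log_two_mul_le {α r R : ℝ} (hα : 0 ≤ α) (hr : 1 ≤ r) (hrR : r ≤ R) :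
    r ^ α / Real.log (2 * r) ≤ R ^ α / Real.log 2 := by
  have hR : 0 ≤ R := by linarith
  gcongr
  linarith

theorem stmt_10_general (α δ c₁ : ℝ) (hα : 0 ≤ α) (hδ0 : 0 < δ) (hδ1 : δ ≤ 1) (hc₁ : 0 < c₁)
    (μ : Measure ℝ)
    (hdom : ∀ E : Set ℝ, MeasurableSet E → E ⊆ Set.Ioo 0 δ →
      ∫⁻ x in E, ENNReal.ofReal (c₁ / ((-Real.log x) * x ^ (1 + α))) ≤ μ E) :
    ∃ c'' > (0 : ℝ), ∃ K > (0 : ℝ), ∀ z : ℝ, 1 < |z| →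
      ENNReal.ofReal (c'' * |z| ^ α / Real.log (2 * |z|) - K)
        ≤ ∫⁻ x in Set.Ioi (0 : ℝ), ENNReal.ofReal (1 - Real.cos (z * x)) ∂μ := by
  set k := (1 - Real.cos (1 / 2)) * (c₁ / 2)
  have one_sub_cos_pos : 0 < 1 - Real.cos (1 / 2) := by
    have := Real.cos_lt_cos_of_nonneg_of_le_pi_div_two le_rfl
      (by linarith [Real.pi_gt_three]) (one_half_pos (α := ℝ))
    rwa [Real.cos_zero, ← sub_pos] at this
  have k_pos : 0 < k := by positivity
  have K_pos : 0 < k * (δ⁻¹ ^ α / Real.log 2) := by positivity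
  refine ⟨k, k_pos, k * (δ⁻¹ ^ α / Real.log 2), K_pos, fun z hz ↦ ?_⟩
  rw [mul_div_assoc]
  rcases le_total |z| δ⁻¹ with z_small | z_large
  · rw [ENNReal.ofReal_of_nonpos (sub_nonpos.2 (mul_le_mul_of_nonneg_left
      (rpow_div_log_two_mul_le hα hz.le z_small) k_pos.le))]
    exact zero_le
  · exact (ENNReal.ofReal_le_ofReal (sub_le_self _ K_pos.le)).trans
      (ofReal_rpow_div_log_le_lintegral_one_sub_cos (by linarith) hδ0 hδ1 hc₁.le hdom z_large)

/-- Estimate (exm-1-a) in Subsection 3.3: if `0 < δ < 1` and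
`μ ≥ c₁ (-log x)⁻¹ x^{-1-α} dx` on `(0,δ)`, then there are `c'' > 0`, `K > 0`
with `∫_{(0,∞)} (1 - cos(z x)) μ(dx) ≥ c'' |z|^α / log(2|z|) - K` for `|z| > 1`. -/
theorem stmt_10 (α δ c₁ : ℝ) (hα : α ∈ Set.Ioo (0 : ℝ) 1)
    (hδ0 : 0 < δ) (hδ1 : δ < 1) (hc₁ : 0 < c₁)
    (μ : Measure ℝ)
    (hdom : ∀ E : Set ℝ, MeasurableSet E → E ⊆ Set.Ioo 0 δ →
      ∫⁻ x in E, ENNReal.ofReal (c₁ / ((-Real.log x) * x ^ (1 + α))) ≤ μ E) :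
    ∃ c'' > (0 : ℝ), ∃ K > (0 : ℝ), ∀ z : ℝ, 1 < |z| →
      ENNReal.ofReal (c'' * |z| ^ α / Real.log (2 * |z|) - K)
        ≤ ∫⁻ x in Set.Ioi (0 : ℝ), ENNReal.ofReal (1 - Real.cos (z * x)) ∂μ :=
  stmt_10_general α δ c₁ hα.1.le hδ0 hδ1.le hc₁ μ hdom
end

section
/- Let α ∈ (0,1) and 0 < δ < 1. Then there exist constants C > 0 and K > 0 such that for all z ∈ ℝ with |z| > 1/δ: ∫₀^δ |sin(zx)|·(−log x)·x^{−1−α} dx ≤ C·|z|^α·log|z| + K. -/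
open MeasureTheory

/-!
Cut the integral at `a = 1 / max 1 |z|`. Below `a` use `|sin (z x)| ≤ |z| x`, which leaves the
explicit integral `∫₀ᵃ x⁻ᵅ log x`; above `a` use `|sin (z x)| ≤ 1` and `-log x ≤ -log a`, which
leaves a power integral. Both parts are of order `a⁻ᵅ (1 - log a)`. Replacing `max 1 |z|` by `|z|`
in the result costs only a constant, because `tᵅ log t` is bounded for `0 < t ≤ 1`.
-/

section RpowMulLog

open Real Set intervalIntegral

variable {s b : ℝ}

lemma continuousOn_rpow_mul_log {r : ℝ} (hr : 0 < r) :
    ContinuousOn (fun x : ℝ ↦ x ^ r * log x) (Ici 0) := by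
  have hcont : Continuous fun x : ℝ ↦ r⁻¹ * (x ^ r * log (x ^ r)) :=
    (continuous_mul_log.comp (continuous_id.rpow_const fun _ ↦ .inr hr.le)).const_mul _
  refine hcont.continuousOn.congr fun x (hx : 0 ≤ x) ↦ ?_
  obtain rfl | hx := hx.eq_or_lt
  · simp [hr.ne']
  · simp only [log_rpow hx]
    field_simp

lemma continuousOn_rpow_mul_log_antideriv (hs : -1 < s) :
    ContinuousOn (fun x : ℝ ↦ x ^ (s + 1) * log x / (s + 1) - x ^ (s + 1) / (s + 1) ^ 2)
      (Ici 0) := by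
  have hs' : 0 < s + 1 := by linarith
  exact ((continuousOn_rpow_mul_log hs').div_const _).sub
    ((continuous_id.rpow_const fun _ ↦ .inr hs'.le).continuousOn.div_const _)

lemma hasDerivAt_rpow_mul_log_antideriv (hs : s ≠ -1) {x : ℝ} (hx : 0 < x) :
    HasDerivAt (fun x : ℝ ↦ x ^ (s + 1) * log x / (s + 1) - x ^ (s + 1) / (s + 1) ^ 2)
      (x ^ s * log x) x := by
  have hs' : s + 1 ≠ 0 := fun h ↦ hs (by linarith)
  have hpow : HasDerivAt (fun x : ℝ ↦ x ^ (s + 1)) ((s + 1) * x ^ s) x := by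
    simpa using hasDerivAt_rpow_const (p := s + 1) (.inl hx.ne')
  refine (((hpow.mul (hasDerivAt_log hx.ne')).div_const (s + 1)).sub
    (hpow.div_const ((s + 1) ^ 2))).congr_deriv ?_
  rw [rpow_add_one hx.ne']
  field_simp
  ring

lemma intervalIntegrable_rpow_mul_log (hs : -1 < s) (hb : 0 < b) :
    IntervalIntegrable (fun x ↦ x ^ s * log x) volume 0 b := by
  -- A nonnegative derivative of a continuous function is integrable; only on `(0, 1)` does the
  -- integrand have the constant sign that this needs.
  have h_neg : IntervalIntegrable (fun x ↦ -(x ^ s * log x)) volume 0 1 := by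
    refine intervalIntegrable_deriv_of_nonneg
      ((continuousOn_rpow_mul_log_antideriv hs).neg.mono ?_) (fun x hx ↦ ?_) fun x hx ↦ ?_
    · simpa using Icc_subset_Ici_self
    · exact (hasDerivAt_rpow_mul_log_antideriv hs.ne' (by simpa using hx.1)).neg
    · obtain ⟨hx0, hx1⟩ : 0 < x ∧ x < 1 := by simpa using hx
      exact neg_nonneg.2 (mul_nonpos_of_nonneg_of_nonpos (by positivity)
        (log_nonpos hx0.le hx1.le))
  have h_zero_one : IntervalIntegrable (fun x ↦ x ^ s * log x) volume 0 1 := by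
    simpa only [Pi.neg_def, neg_neg] using h_neg.neg
  refine h_zero_one.trans (ContinuousOn.intervalIntegrable fun x hx ↦ ?_)
  have hx0 : x ≠ 0 := ((lt_min one_pos hb).trans_le hx.1).ne'
  exact ((continuousAt_rpow_const _ _ (.inl hx0)).mul (continuousAt_log hx0)).continuousWithinAt

lemma integral_rpow_mul_log (hs : -1 < s) (hb : 0 < b) :
    ∫ x in 0..b, x ^ s * log x = b ^ (s + 1) * log b / (s + 1) - b ^ (s + 1) / (s + 1) ^ 2 := by
  rw [integral_eq_sub_of_hasDerivAt_of_le hb.le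
    ((continuousOn_rpow_mul_log_antideriv hs).mono Icc_subset_Ici_self)
    (fun x hx ↦ hasDerivAt_rpow_mul_log_antideriv hs.ne' hx.1)
    (intervalIntegrable_rpow_mul_log hs hb)]
  simp [zero_rpow (by linarith : s + 1 ≠ 0)]

lemma integral_rpow_le_of_lt_neg_one {a : ℝ} (hs : s < -1) (ha : 0 < a) (hab : a ≤ b) :
    ∫ x in a..b, x ^ s ≤ a ^ (s + 1) / -(s + 1) := by
  have hb : 0 < b := ha.trans_le hab
  rw [integral_rpow (.inr ⟨hs.ne, notMem_uIcc_of_lt ha hb⟩), ← neg_div_neg_eq]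
  have : 0 ≤ b ^ (s + 1) := by positivity
  have : 0 < -(s + 1) := by linarith
  gcongr
  linarith

end RpowMulLog

section LogStable

open Real Set intervalIntegral

variable {φ : ℝ → ℝ} {α w : ℝ}

lemma abs_mul_neg_log_mul_rpow_nonneg {x : ℝ} (hx0 : 0 ≤ x) (hx1 : x ≤ 1) :
    0 ≤ |φ x| * (-log x) * x ^ (-1 - α) :=
  mul_nonneg (mul_nonneg (abs_nonneg _) (neg_nonneg.2 (log_nonpos hx0 hx1))) (rpow_nonneg hx0 _)

lemma abs_mul_rpow_le (hφw : ∀ x, |φ x| ≤ w * |x|) {x : ℝ} (hx : 0 < x) :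
    |φ x| * x ^ (-1 - α) ≤ w * x ^ (-α) := by
  calc |φ x| * x ^ (-1 - α) ≤ w * x * x ^ (-1 - α) := by
        gcongr
        simpa [abs_of_pos hx] using hφw x
    _ = w * x ^ (-α) := by
        rw [show -α = 1 + (-1 - α) by ring, rpow_add hx, rpow_one, mul_assoc]

lemma abs_mul_neg_log_mul_rpow_le (hφw : ∀ x, |φ x| ≤ w * |x|) {x : ℝ} (hx0 : 0 < x)
    (hx1 : x ≤ 1) :
    |φ x| * (-log x) * x ^ (-1 - α) ≤ -w * (x ^ (-α) * log x) := by
  calc |φ x| * (-log x) * x ^ (-1 - α) = |φ x| * x ^ (-1 - α) * (-log x) := by ring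
    _ ≤ w * x ^ (-α) * (-log x) :=
        mul_le_mul_of_nonneg_right (abs_mul_rpow_le hφw hx0)
          (neg_nonneg.2 (log_nonpos hx0.le hx1))
    _ = -w * (x ^ (-α) * log x) := by ring

lemma intervalIntegrable_abs_mul_neg_log_mul_rpow (hφ : Measurable φ)
    (hφw : ∀ x, |φ x| ≤ w * |x|) (hα : α < 1) {b : ℝ} (hb : 0 < b) :
    IntervalIntegrable (fun x ↦ |φ x| * (-log x) * x ^ (-1 - α)) volume 0 b := by
  have hbound : IntervalIntegrable (fun x ↦ w * |x ^ (-α) * log x|) volume 0 b :=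
    (intervalIntegrable_rpow_mul_log (by linarith) hb).abs.const_mul w
  refine hbound.mono_fun' (by fun_prop) ?_
  rw [uIoc_of_le hb.le]
  filter_upwards [ae_restrict_mem measurableSet_Ioc] with x ⟨hx, _⟩
  calc ‖|φ x| * (-log x) * x ^ (-1 - α)‖ = |φ x| * x ^ (-1 - α) * |log x| := by
        simp only [norm_eq_abs, abs_mul, abs_abs, abs_neg, abs_of_pos (rpow_pos_of_pos hx _)]
        ring
    _ ≤ w * x ^ (-α) * |log x| :=
        mul_le_mul_of_nonneg_right (abs_mul_rpow_le hφw hx) (abs_nonneg _)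
    _ = w * |x ^ (-α) * log x| := by
        rw [abs_mul, abs_of_pos (rpow_pos_of_pos hx _), mul_assoc]

lemma integral_abs_mul_neg_log_mul_rpow_head_le (hφ : Measurable φ)
    (hφw : ∀ x, |φ x| ≤ w * |x|) (hα : α < 1) {a : ℝ} (ha0 : 0 < a) (ha1 : a ≤ 1) :
    ∫ x in 0..a, |φ x| * (-log x) * x ^ (-1 - α) ≤
      w * a ^ (1 - α) * (-log a / (1 - α) + 1 / (1 - α) ^ 2) := by
  calc ∫ x in 0..a, |φ x| * (-log x) * x ^ (-1 - α)
      ≤ ∫ x in 0..a, -w * (x ^ (-α) * log x) :=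
        integral_mono_on_of_le_Ioo ha0.le
          (intervalIntegrable_abs_mul_neg_log_mul_rpow hφ hφw hα ha0)
          ((intervalIntegrable_rpow_mul_log (by linarith) ha0).const_mul _)
          fun x hx ↦ abs_mul_neg_log_mul_rpow_le hφw hx.1 (hx.2.le.trans ha1)
    _ = w * a ^ (1 - α) * (-log a / (1 - α) + 1 / (1 - α) ^ 2) := by
        rw [intervalIntegral.integral_const_mul, integral_rpow_mul_log (by linarith) ha0,
          neg_add_eq_sub]
        ring

lemma abs_mul_neg_log_mul_rpow_le_of_abs_le_one (hφ1 : ∀ x, |φ x| ≤ 1) {a x : ℝ} (ha : 0 < a)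
    (hax : a ≤ x) (hx1 : x ≤ 1) :
    |φ x| * (-log x) * x ^ (-1 - α) ≤ -log a * x ^ (-1 - α) := by
  have hx0 : 0 < x := ha.trans_le hax
  refine mul_le_mul_of_nonneg_right ?_ (rpow_nonneg hx0.le _)
  calc |φ x| * (-log x) ≤ -log x :=
        mul_le_of_le_one_left (neg_nonneg.2 (log_nonpos hx0.le hx1)) (hφ1 x)
    _ ≤ -log a := neg_le_neg (log_le_log ha hax)

lemma integral_abs_mul_neg_log_mul_rpow_tail_le (hφ : Measurable φ) (hφ1 : ∀ x, |φ x| ≤ 1)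
    (hα : 0 < α) {a : ℝ} (ha0 : 0 < a) (ha1 : a ≤ 1) :
    ∫ x in a..1, |φ x| * (-log x) * x ^ (-1 - α) ≤ -log a * (a ^ (-α) / α) := by
  have hbound : IntervalIntegrable (fun x ↦ -log a * x ^ (-1 - α)) volume a 1 :=
    (intervalIntegrable_rpow (.inr (notMem_uIcc_of_lt ha0 one_pos))).const_mul _
  have hint : IntervalIntegrable (fun x ↦ |φ x| * (-log x) * x ^ (-1 - α)) volume a 1 := by
    refine hbound.mono_fun' (by fun_prop) ?_
    rw [uIoc_of_le ha1]
    filter_upwards [ae_restrict_mem measurableSet_Ioc] with x ⟨hax, hx1⟩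
    rw [norm_of_nonneg (abs_mul_neg_log_mul_rpow_nonneg (ha0.trans hax).le hx1)]
    exact abs_mul_neg_log_mul_rpow_le_of_abs_le_one hφ1 ha0 hax.le hx1
  calc ∫ x in a..1, |φ x| * (-log x) * x ^ (-1 - α)
      ≤ ∫ x in a..1, -log a * x ^ (-1 - α) :=
        integral_mono_on ha1 hint hbound fun x hx ↦
          abs_mul_neg_log_mul_rpow_le_of_abs_le_one hφ1 ha0 hx.1 hx.2
    _ = -log a * ∫ x in a..1, x ^ (-1 - α) := intervalIntegral.integral_const_mul _ _
    _ ≤ -log a * (a ^ (-1 - α + 1) / -(-1 - α + 1)) :=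
        mul_le_mul_of_nonneg_left (integral_rpow_le_of_lt_neg_one (by linarith) ha0 ha1)
          (neg_nonneg.2 (log_nonpos ha0.le ha1))
    _ = -log a * (a ^ (-α) / α) := by ring_nf

lemma integral_abs_mul_neg_log_mul_rpow_le (hφ : Measurable φ)
    (hφw : ∀ x, |φ x| ≤ w * |x|) (hφ1 : ∀ x, |φ x| ≤ 1) (hα : α ∈ Ioo 0 1) :
    ∫ x in 0..1, |φ x| * (-log x) * x ^ (-1 - α) ≤
      max 1 w ^ α * ((1 / (1 - α) + 1 / α) * log (max 1 w) + 1 / (1 - α) ^ 2) := by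
  set m := max 1 w
  have hm1 : 1 ≤ m := le_max_left 1 w
  have hm0 : 0 < m := one_pos.trans_le hm1
  have hφm : ∀ x, |φ x| ≤ m * |x| := fun x ↦ (hφw x).trans (by gcongr; exact le_max_right 1 w)
  have hinv0 : 0 < m⁻¹ := inv_pos.2 hm0
  have hinv1 : m⁻¹ ≤ 1 := inv_le_one_of_one_le₀ hm1
  have hint_head := intervalIntegrable_abs_mul_neg_log_mul_rpow hφ hφm hα.2 hinv0
  have hint := intervalIntegrable_abs_mul_neg_log_mul_rpow hφ hφm hα.2 one_pos
  have hhead := integral_abs_mul_neg_log_mul_rpow_head_le hφ hφm hα.2 hinv0 hinv1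
  have htail := integral_abs_mul_neg_log_mul_rpow_tail_le hφ hφ1 hα.1 hinv0 hinv1
  have hpow_head : m * m⁻¹ ^ (1 - α) = m ^ α := by
    rw [inv_rpow hm0.le, ← rpow_neg hm0.le, ← rpow_one_add' hm0.le (by linarith [hα.1]),
      neg_sub, add_sub_cancel]
  have hpow_tail : m⁻¹ ^ (-α) = m ^ α := by
    rw [inv_rpow hm0.le, rpow_neg hm0.le, inv_inv]
  rw [log_inv, neg_neg] at hhead htail
  rw [hpow_head] at hhead
  rw [hpow_tail] at htail
  calc ∫ x in 0..1, |φ x| * (-log x) * x ^ (-1 - α)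
      = (∫ x in 0..m⁻¹, |φ x| * (-log x) * x ^ (-1 - α)) +
          ∫ x in m⁻¹..1, |φ x| * (-log x) * x ^ (-1 - α) :=
        (integral_add_adjacent_intervals hint_head (hint_head.symm.trans hint)).symm
    _ ≤ m ^ α * (log m / (1 - α) + 1 / (1 - α) ^ 2) + log m * (m ^ α / α) :=
        add_le_add hhead htail
    _ = m ^ α * ((1 / (1 - α) + 1 / α) * log m + 1 / (1 - α) ^ 2) := by ring

lemma setIntegral_Ioo_abs_mul_neg_log_mul_rpow_le_integral (hφ : Measurable φ)
    (hφw : ∀ x, |φ x| ≤ w * |x|) (hα : α < 1) (δ : ℝ) :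
    ∫ x in Ioo 0 δ, |φ x| * (-log x) * x ^ (-1 - α) ≤
      ∫ x in 0..1, |φ x| * (-log x) * x ^ (-1 - α) := by
  have hint {b : ℝ} (hb : 0 < b) := intervalIntegrable_abs_mul_neg_log_mul_rpow hφ hφw hα hb
  rcases le_total δ 1 with hδ | hδ
  · rw [integral_of_le zero_le_one]
    refine setIntegral_mono_set (hint one_pos).1 ?_
      (Ioo_subset_Ioc_self.trans (Ioc_subset_Ioc_right hδ)).eventuallyLE
    filter_upwards [ae_restrict_mem measurableSet_Ioc] with x ⟨hx0, hx1⟩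
    exact abs_mul_neg_log_mul_rpow_nonneg hx0.le hx1
  · have hδ0 : 0 < δ := one_pos.trans_le hδ
    have htail : ∫ x in 1..δ, |φ x| * (-log x) * x ^ (-1 - α) ≤ 0 := by
      rw [integral_of_le hδ]
      refine setIntegral_nonpos measurableSet_Ioc fun x hx ↦ ?_
      have hx0 : 0 ≤ x := zero_le_one.trans hx.1.le
      exact mul_nonpos_of_nonpos_of_nonneg (mul_nonpos_of_nonneg_of_nonpos (abs_nonneg _)
        (neg_nonpos.2 (log_nonneg hx.1.le))) (rpow_nonneg hx0 _)
    rw [← integral_Ioc_eq_integral_Ioo, ← integral_of_le hδ0.le,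
      ← integral_add_adjacent_intervals (hint one_pos) ((hint one_pos).symm.trans (hint hδ0))]
    linarith

end LogStable

section Growth

open Real

variable {α : ℝ}

lemma max_one_rpow_mul_log_le (hα : 0 < α) {w : ℝ} (hw : 0 ≤ w) :
    max 1 w ^ α * log (max 1 w) ≤ w ^ α * log w + 1 / α := by
  have hα' : 0 < 1 / α := by positivity
  rcases le_total 1 w with h1w | hw1
  · rw [max_eq_right h1w]
    linarith
  rw [max_eq_left hw1, log_one, mul_zero]
  obtain rfl | hw := hw.eq_or_lt
  · rw [zero_rpow hα.ne']
    linarith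
  · linarith [(abs_lt.1 (abs_log_mul_self_rpow_lt w α hw hw1 hα)).1]

lemma rpow_le_rpow_mul_log_add_exp (hα : 0 ≤ α) {m : ℝ} (hm : 1 ≤ m) :
    m ^ α ≤ m ^ α * log m + exp α := by
  have hm0 : 0 < m := one_pos.trans_le hm
  rcases le_total m (exp 1) with hme | hem
  · have hlog : 0 ≤ log m := log_nonneg hm
    calc m ^ α ≤ exp 1 ^ α := by gcongr
      _ = exp α := exp_one_rpow α
      _ ≤ m ^ α * log m + exp α := le_add_of_nonneg_left (by positivity)
  · have hlog : 1 ≤ log m := (le_log_iff_exp_le hm0).2 hem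
    calc m ^ α ≤ m ^ α * log m := le_mul_of_one_le_right (by positivity) hlog
      _ ≤ m ^ α * log m + exp α := le_add_of_nonneg_right (exp_pos α).le

lemma max_one_rpow_mul_affine_log_le (hα : 0 < α) {A B w : ℝ} (hA : 0 ≤ A) (hB : 0 ≤ B)
    (hw : 0 ≤ w) :
    max 1 w ^ α * (A * log (max 1 w) + B) ≤
      (A + B) * w ^ α * log w + ((A + B) / α + B * exp α) := by
  set m := max 1 w
  calc m ^ α * (A * log m + B) = A * (m ^ α * log m) + B * m ^ α := by ring
    _ ≤ A * (m ^ α * log m) + B * (m ^ α * log m + exp α) := by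
        gcongr
        exact rpow_le_rpow_mul_log_add_exp hα.le (le_max_left 1 w)
    _ = (A + B) * (m ^ α * log m) + B * exp α := by ring
    _ ≤ (A + B) * (w ^ α * log w + 1 / α) + B * exp α := by
        gcongr
        exact max_one_rpow_mul_log_le hα hw
    _ = (A + B) * w ^ α * log w + ((A + B) / α + B * exp α) := by ring

end Growth

theorem stmt_11_general {α : ℝ} (hα : α ∈ Set.Ioo (0 : ℝ) 1) :
    ∃ C > (0 : ℝ), ∃ K > (0 : ℝ), ∀ δ z : ℝ,
      ∫ x in Set.Ioo (0 : ℝ) δ, |Real.sin (z * x)| * (-Real.log x) * x ^ (-1 - α)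
        ≤ C * |z| ^ α * Real.log |z| + K := by
  have hα0 : 0 < α := hα.1
  have hα1 : 0 < 1 - α := sub_pos.2 hα.2
  let A := 1 / (1 - α) + 1 / α
  let B := 1 / (1 - α) ^ 2
  have hA : 0 < A := by positivity
  have hB : 0 < B := by positivity
  refine ⟨A + B, by positivity, (A + B) / α + B * Real.exp α, by positivity, fun δ z ↦ ?_⟩
  have hsin : Measurable fun x ↦ Real.sin (z * x) := by fun_prop
  have hsin_le : ∀ x, |Real.sin (z * x)| ≤ |z| * |x| := fun x ↦
    Real.abs_sin_le_abs.trans_eq (abs_mul z x)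
  calc ∫ x in Set.Ioo (0 : ℝ) δ, |Real.sin (z * x)| * (-Real.log x) * x ^ (-1 - α)
      ≤ ∫ x in 0..1, |Real.sin (z * x)| * (-Real.log x) * x ^ (-1 - α) :=
        setIntegral_Ioo_abs_mul_neg_log_mul_rpow_le_integral hsin hsin_le hα.2 δ
    _ ≤ max 1 |z| ^ α * (A * Real.log (max 1 |z|) + B) :=
        integral_abs_mul_neg_log_mul_rpow_le hsin hsin_le (fun _ ↦ Real.abs_sin_le_one _) hα
    _ ≤ (A + B) * |z| ^ α * Real.log |z| + ((A + B) / α + B * Real.exp α) :=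
        max_one_rpow_mul_affine_log_le hα0 hA.le hB.le (abs_nonneg z)

/-- Estimate (exm-2-a) in Subsection 3.3: for `α ∈ (0,1)` and `0 < δ < 1`, there
are `C > 0`, `K > 0` such that for all `z` with `|z| > 1/δ`,
`∫₀^δ |sin(z x)| (-log x) x^{-1-α} dx ≤ C |z|^α log|z| + K`. -/
theorem stmt_11 (α δ : ℝ) (hα : α ∈ Set.Ioo (0 : ℝ) 1) (hδ : δ ∈ Set.Ioo (0 : ℝ) 1) :
    ∃ C > (0 : ℝ), ∃ K > (0 : ℝ), ∀ z : ℝ, 1 / δ < |z| →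
      ∫ x in Set.Ioo (0 : ℝ) δ, |Real.sin (z * x)| * (-Real.log x) * x ^ (-1 - α)
        ≤ C * |z| ^ α * Real.log |z| + K := by
  obtain ⟨C, hC, K, hK, hbound⟩ := stmt_11_general hα
  exact ⟨C, hC, K, hK, fun z _ ↦ hbound δ z⟩
end

section
/- Let γ > 0 and let ψ : ℝ → ℂ be continuous with Re ψ(z) ≥ 0 for all z and liminf_{|z|→∞} Re ψ(z)/(|z|·log^γ|z|) > 0. Then ∫_ℝ 1_{{|Im ψ(z)| > (1+Re ψ(z))·log(1+Re ψ(z))}} · |Im ψ(z)| / ((1+Re ψ(z))² + (Im ψ(z))²) dz < ∞. -/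
open MeasureTheory

/-!
Where the indicator does not vanish, the integrand is at most `1 / |Im ψ|`, hence at most
`1 / ((1 + Re ψ) log (1 + Re ψ))`. The growth hypothesis gives `Re ψ z ≥ c |z| log^γ |z| ≥ |z|` for
large `|z|`, so `log (1 + Re ψ z) ≥ log |z|` gains one more logarithm, and the tail is dominated by
`1 / (c |z| log^(γ+1) |z|)`, which is integrable at infinity because `γ > 0`. Near the origin the
integrand is bounded, since `1 + Re ψ ≥ 1`.
-/

open Filter Metric Real Set Module
open scoped ENNReal NNReal

section SquareSums

lemma abs_div_sq_add_sq_le_one {u : ℝ} (hu : 1 ≤ u) (v : ℝ) : |v| / (u ^ 2 + v ^ 2) ≤ 1 := by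
  rw [div_le_one (by positivity), ← sq_abs v]
  nlinarith [sq_nonneg (|v| - 1)]

lemma abs_div_sq_add_sq_le_inv {t v : ℝ} (ht : 0 < t) (htv : t ≤ |v|) (u : ℝ) :
    |v| / (u ^ 2 + v ^ 2) ≤ t⁻¹ := by
  have hv : 0 < |v| := ht.trans_le htv
  calc |v| / (u ^ 2 + v ^ 2) ≤ |v| / v ^ 2 :=
        div_le_div_of_nonneg_left hv.le (by rw [← sq_abs]; positivity)
          (le_add_of_nonneg_left (sq_nonneg u))
    _ = |v|⁻¹ := by rw [← sq_abs, sq, div_mul_cancel_left₀ hv.ne']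
    _ ≤ t⁻¹ := inv_anti₀ ht htv

end SquareSums

section Logarithms

lemma integrableOn_Ioi_inv_mul_log_rpow_iff {a s : ℝ} (ha : 1 < a) :
    IntegrableOn (fun x ↦ (x * log x ^ s)⁻¹) (Ioi a) ↔ 1 < s := by
  have h_congr : EqOn (fun x ↦ (x * log x ^ s)⁻¹) (fun x ↦ x⁻¹ • log x ^ (-s)) (Ioi a) := by
    intro x hx
    simp only [mul_inv, smul_eq_mul, rpow_neg (log_nonneg (ha.trans hx).le)]
  rw [integrableOn_congr_fun h_congr measurableSet_Ioi,
    integrableOn_comp_log_Ioi (· ^ (-s)) (zero_lt_one.trans ha),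
    integrableOn_Ioi_rpow_iff (log_pos ha), neg_lt_neg_iff]

lemma eventually_le_mul_mul_log_rpow {c γ : ℝ} (hc : 0 < c) (hγ : 0 < γ) :
    ∀ᶠ x in atTop, x ≤ c * (x * log x ^ γ) := by
  have h_tendsto : Tendsto (fun x ↦ log x ^ γ) atTop atTop :=
    (tendsto_rpow_atTop hγ).comp tendsto_log_atTop
  filter_upwards [h_tendsto.eventually_ge_atTop c⁻¹, eventually_ge_atTop 0] with x hx hx₀
  calc x = c * (x * c⁻¹) := by field_simp
    _ ≤ c * (x * log x ^ γ) := by gcongr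

lemma mul_mul_log_rpow_add_one_le {c γ x u : ℝ} (hx : 1 < x)
    (hxu : x ≤ u) (hu : c * (x * log x ^ γ) ≤ u) :
    c * (x * log x ^ (γ + 1)) ≤ (1 + u) * log (1 + u) := by
  have hlog : 0 < log x := log_pos hx
  calc c * (x * log x ^ (γ + 1)) = c * (x * log x ^ γ) * log x := by
        rw [rpow_add_one hlog.ne']; ring
    _ ≤ (1 + u) * log (1 + u) := by gcongr <;> linarith

end Logarithms

section Radial

variable {E : Type*} [NormedAddCommGroup E] [NormedSpace ℝ E] [Nontrivial E]
  [FiniteDimensional ℝ E] [MeasurableSpace E] [BorelSpace E] {μ : Measure E} [μ.IsAddHaarMeasure]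

lemma integrableOn_compl_closedBall_fun_norm {g : ℝ → ℝ} {r : ℝ}
    (hg : IntegrableOn (fun y ↦ y ^ (finrank ℝ E - 1) • g y) (Ioi r)) :
    IntegrableOn (fun z ↦ g ‖z‖) (closedBall (0 : E) r)ᶜ μ := by
  have h_preimage : (closedBall (0 : E) r)ᶜ = norm ⁻¹' Ioi r := by ext; simp
  rw [← integrable_indicator_iff measurableSet_closedBall.compl, h_preimage]
  refine (integrable_fun_norm_addHaar μ (f := (Ioi r).indicator g)).2 ?_
  rw [← indicator_smul]
  exact (hg.integrable_indicator measurableSet_Ioi).integrableOn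

lemma lintegral_lt_top_of_le_fun_norm {f : E → ℝ≥0∞} {g : ℝ → ℝ} {r : ℝ} (C : ℝ≥0)
    (hfC : ∀ z, ‖z‖ ≤ r → f z ≤ C) (hfg : ∀ z, r < ‖z‖ → f z ≤ ENNReal.ofReal (g ‖z‖))
    (hg : IntegrableOn (fun y ↦ y ^ (finrank ℝ E - 1) • g y) (Ioi r)) :
    ∫⁻ z, f z ∂μ < ∞ := by
  rw [← lintegral_add_compl f (measurableSet_closedBall (x := 0) (ε := r)), ENNReal.add_lt_top]
  constructor
  · exact setLIntegral_lt_top_of_le_nnreal measure_closedBall_lt_top.ne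
      ⟨C, fun z hz ↦ hfC z (mem_closedBall_zero_iff.1 hz)⟩
  · calc ∫⁻ z in (closedBall 0 r)ᶜ, f z ∂μ
        ≤ ∫⁻ z in (closedBall 0 r)ᶜ, ENNReal.ofReal (g ‖z‖) ∂μ :=
          setLIntegral_mono' measurableSet_closedBall.compl fun z hz ↦ hfg z (by simpa using hz)
      _ < ∞ := (integrableOn_compl_closedBall_fun_norm hg).setLIntegral_lt_top

lemma lintegral_indicator_abs_div_sq_add_sq_lt_top {u v F : E → ℝ} {b : ℝ → ℝ} {r : ℝ}
    (hu : ∀ z, 1 ≤ u z) (hb : ∀ y, r < y → 0 < b y) (hbF : ∀ z, r < ‖z‖ → b ‖z‖ ≤ F z)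
    (hint : IntegrableOn (fun y ↦ y ^ (finrank ℝ E - 1) • (b y)⁻¹) (Ioi r)) :
    ∫⁻ z, {z | F z < |v z|}.indicator
      (fun z ↦ ENNReal.ofReal (|v z| / (u z ^ 2 + v z ^ 2))) z ∂μ < ∞ := by
  refine lintegral_lt_top_of_le_fun_norm 1 (fun z _ ↦ ?_) (fun z hz ↦ ?_) hint
  · refine indicator_apply_le' (fun _ ↦ ?_) fun _ ↦ zero_le
    simpa using abs_div_sq_add_sq_le_one (hu z) (v z)
  · refine indicator_apply_le' (fun hFv ↦ ENNReal.ofReal_le_ofReal ?_) fun _ ↦ zero_le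
    exact abs_div_sq_add_sq_le_inv (hb _ hz) ((hbF z hz).trans (le_of_lt hFv)) (u z)

end Radial

theorem stmt_12_general (γ : ℝ) (hγ : 0 < γ) (ψ : ℝ → ℂ) (hre : ∀ z, 0 ≤ (ψ z).re)
    (hliminf : ∃ c > (0 : ℝ), ∃ R : ℝ, ∀ z : ℝ, R ≤ |z| →
      c ≤ (ψ z).re / (|z| * log |z| ^ γ)) :
    ∫⁻ z : ℝ, {z : ℝ | (1 + (ψ z).re) * log (1 + (ψ z).re) < |(ψ z).im|}.indicator
      (fun z ↦ ENNReal.ofReal (|(ψ z).im| / ((1 + (ψ z).re) ^ 2 + (ψ z).im ^ 2))) z < ∞ := by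
  obtain ⟨c, hc, R, hR⟩ := hliminf
  obtain ⟨r, hr⟩ := ((eventually_gt_atTop 1).and
    ((eventually_ge_atTop R).and (eventually_le_mul_mul_log_rpow hc hγ))).exists_forall_of_atTop
  have hr₁ : 1 < r := (hr r le_rfl).1
  refine lintegral_indicator_abs_div_sq_add_sq_lt_top (b := fun y ↦ c * (y * log y ^ (γ + 1)))
    (r := r) (fun z ↦ le_add_of_nonneg_right (hre z)) (fun y hy ↦ ?_) (fun z hz ↦ ?_) ?_
  · have hlog : 0 < log y := log_pos (hr₁.trans hy)
    have hy₀ : 0 < y := by linarith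
    positivity
  · obtain ⟨hz₁, hRz, hz_le⟩ := hr |z| (le_of_lt hz)
    have hlog : 0 < log |z| := log_pos hz₁
    have h_growth : c * (|z| * log |z| ^ γ) ≤ (ψ z).re :=
      (le_div_iff₀ (by positivity)).1 (hR z hRz)
    exact mul_mul_log_rpow_add_one_le hz₁ (hz_le.trans h_growth) h_growth
  · simpa [IntegrableOn] using
      ((integrableOn_Ioi_inv_mul_log_rpow_iff hr₁).2 (lt_add_of_pos_left 1 hγ)).mul_const c⁻¹

/-- Verification of the (EKFR) condition with `f(λ) = log λ` in the proof of
Theorem 4.6: if `ψ : ℝ → ℂ` is continuous with `Re ψ ≥ 0` and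
`liminf_{|z|→∞} Re ψ(z)/(|z| log^γ|z|) > 0`, then
`∫_ℝ 1_{|Im ψ| > (1+Re ψ) log(1+Re ψ)} |Im ψ| / ((1+Re ψ)² + (Im ψ)²) dz < ∞`. -/
theorem stmt_12 (γ : ℝ) (hγ : 0 < γ) (ψ : ℝ → ℂ) (hψ : Continuous ψ)
    (hre : ∀ z, 0 ≤ (ψ z).re)
    (hliminf : ∃ c > (0 : ℝ), ∃ R : ℝ, ∀ z : ℝ, R ≤ |z| →
      c ≤ (ψ z).re / (|z| * Real.log |z| ^ γ)) :
    ∫⁻ z : ℝ,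
        {z : ℝ | (1 + (ψ z).re) * Real.log (1 + (ψ z).re) < |(ψ z).im|}.indicator
          (fun z => ENNReal.ofReal
            (|(ψ z).im| / ((1 + (ψ z).re) ^ 2 + (ψ z).im ^ 2))) z
      < ⊤ :=
  stmt_12_general γ hγ ψ hre hliminf
end

section
/- Let γ > 0, 0 < δ < 1, c > 0, and let μ be a Borel measure on ℝ∖{0} such that μ ≥ c·(−log|x|)^γ·x^{−2}dx on {x ∈ ℝ : 0 < |x| < δ}. Then liminf_{|z|→∞} ( ∫_{ℝ∖{0}} (1 − cos(zx)) μ(dx) ) / (|z|·log^γ|z|) > 0. -/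
open MeasureTheory

/-!
Since `1 - cos t ≥ 2 t² / π²` for `|t| ≤ π`, the integral of `1 - cos (z x)` dominates a multiple of
`z²` times the second moment of `μ` on any set where `|z x| ≤ π`. The factor `x²` cancels the
singularity of the density, so on `1 / (2 |z|) < x < 1 / |z|`, an interval of length `1 / (2 |z|)`
where `-log x` is comparable to `log |z|`, this second moment is at least a multiple of
`log |z| ^ γ / |z|`.
-/

section

open Real Set

theorem setLIntegral_mul_le_of_setLIntegral_le {α : Type*} [MeasurableSpace α] {μ ν : Measure α}
    {s : Set α} (hs : MeasurableSet s) {f g : α → ENNReal} (hf : Measurable f) (hg : Measurable g)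
    (hdom : ∀ t, MeasurableSet t → t ⊆ s → ∫⁻ x in t, f x ∂ν ≤ μ t) :
    ∫⁻ x in s, f x * g x ∂ν ≤ ∫⁻ x in s, g x ∂μ := by
  have hle : (ν.withDensity f).restrict s ≤ μ.restrict s := by
    refine Measure.le_iff.2 fun t ht => ?_
    rw [Measure.restrict_apply ht, Measure.restrict_apply ht, withDensity_apply _ (ht.inter hs)]
    exact hdom _ (ht.inter hs) inter_subset_right
  calc ∫⁻ x in s, f x * g x ∂ν = ∫⁻ x in s, g x ∂ν.withDensity f :=
        (setLIntegral_withDensity_eq_setLIntegral_mul ν hf hg hs).symm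
    _ ≤ ∫⁻ x in s, g x ∂μ := lintegral_mono' hle le_rfl

theorem setLIntegral_le_setLIntegral_sq_of_density_div_sq {μ ν : Measure ℝ} {s : Set ℝ}
    (hs : MeasurableSet s) (hs0 : 0 ∉ s) {k : ℝ → ℝ} (hk : Measurable k)
    (hdom : ∀ t, MeasurableSet t → t ⊆ s → ∫⁻ x in t, ENNReal.ofReal (k x / x ^ 2) ∂ν ≤ μ t) :
    ∫⁻ x in s, ENNReal.ofReal (k x) ∂ν ≤ ∫⁻ x in s, ENNReal.ofReal (x ^ 2) ∂μ := by
  have hcancel : ∀ x ∈ s,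
      ENNReal.ofReal (k x) = ENNReal.ofReal (k x / x ^ 2) * ENNReal.ofReal (x ^ 2) := by
    intro x hx
    have hx0 : x ≠ 0 := ne_of_mem_of_not_mem hx hs0
    rw [← ENNReal.ofReal_mul' (sq_nonneg x), div_mul_cancel₀ _ (pow_ne_zero 2 hx0)]
  rw [setLIntegral_congr_fun hs hcancel]
  exact setLIntegral_mul_le_of_setLIntegral_le hs (by fun_prop) (by fun_prop) hdom

theorem ofReal_mul_setLIntegral_sq_le_setLIntegral_one_sub_cos (μ : Measure ℝ) {s : Set ℝ}
    (hs : MeasurableSet s) {z : ℝ} (hz : ∀ x ∈ s, |z * x| ≤ π) :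
    ENNReal.ofReal (2 / π ^ 2 * z ^ 2) * ∫⁻ x in s, ENNReal.ofReal (x ^ 2) ∂μ
      ≤ ∫⁻ x in s, ENNReal.ofReal (1 - cos (z * x)) ∂μ := by
  rw [← lintegral_const_mul _ (by fun_prop)]
  refine setLIntegral_mono' hs fun x hx => ?_
  rw [← ENNReal.ofReal_mul (by positivity)]
  refine ENNReal.ofReal_le_ofReal ?_
  linarith [cos_le_one_sub_mul_cos_sq (hz x hx), mul_pow z x 2]

theorem ofReal_mul_setLIntegral_le_lintegral_one_sub_cos {μ ν : Measure ℝ} {s : Set ℝ}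
    (hs : MeasurableSet s) (hs0 : 0 ∉ s) {k : ℝ → ℝ} (hk : Measurable k)
    (hdom : ∀ t, MeasurableSet t → t ⊆ s → ∫⁻ x in t, ENNReal.ofReal (k x / x ^ 2) ∂ν ≤ μ t)
    {z : ℝ} (hz : ∀ x ∈ s, |z * x| ≤ π) :
    ENNReal.ofReal (2 / π ^ 2 * z ^ 2) * ∫⁻ x in s, ENNReal.ofReal (k x) ∂ν
      ≤ ∫⁻ x in {0}ᶜ, ENNReal.ofReal (1 - cos (z * x)) ∂μ :=
  calc ENNReal.ofReal (2 / π ^ 2 * z ^ 2) * ∫⁻ x in s, ENNReal.ofReal (k x) ∂ν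
      ≤ ENNReal.ofReal (2 / π ^ 2 * z ^ 2) * ∫⁻ x in s, ENNReal.ofReal (x ^ 2) ∂μ := by
        gcongr _ * ?_
        exact setLIntegral_le_setLIntegral_sq_of_density_div_sq hs hs0 hk hdom
    _ ≤ ∫⁻ x in s, ENNReal.ofReal (1 - cos (z * x)) ∂μ :=
        ofReal_mul_setLIntegral_sq_le_setLIntegral_one_sub_cos μ hs hz
    _ ≤ ∫⁻ x in {0}ᶜ, ENNReal.ofReal (1 - cos (z * x)) ∂μ :=
        lintegral_mono_set (subset_compl_singleton_iff.2 hs0)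

theorem min_one_rpow_mul_rpow_le_rpow {a b t : ℝ} (γ : ℝ) (ha : 0 < a) (hb : 0 ≤ b)
    (hat : a ≤ t) (htb : t ≤ b * a) : min 1 (b ^ γ) * a ^ γ ≤ t ^ γ := by
  rcases le_total 0 γ with hγ | hγ
  · calc min 1 (b ^ γ) * a ^ γ ≤ 1 * a ^ γ := by gcongr; exact min_le_left _ _
      _ ≤ t ^ γ := by rw [one_mul]; gcongr
  · calc min 1 (b ^ γ) * a ^ γ ≤ b ^ γ * a ^ γ := by gcongr; exact min_le_right _ _
      _ = (b * a) ^ γ := (mul_rpow hb ha.le).symm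
      _ ≤ t ^ γ := rpow_le_rpow_of_nonpos (ha.trans_le hat) htb hγ

theorem neg_log_mem_Icc_log {w x : ℝ} (hw : 2 ≤ w) (hx : x ∈ Ioo (2 * w)⁻¹ w⁻¹) :
    -log x ∈ Icc (log w) (2 * log w) := by
  have hw0 : 0 < w := by linarith
  have hx0 : 0 < x := lt_trans (by positivity) hx.1
  have hlower : log x ≤ -log w := log_inv w ▸ log_le_log hx0 hx.2.le
  have hupper : -log (2 * w) ≤ log x := log_inv (2 * w) ▸ log_le_log (by positivity) hx.1.le
  have hlog_two : log 2 ≤ log w := log_le_log two_pos hw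
  rw [log_mul two_ne_zero hw0.ne'] at hupper
  constructor <;> linarith

theorem ofReal_log_rpow_div_le_setLIntegral_neg_log_rpow {c w : ℝ} (γ : ℝ) (hc : 0 ≤ c)
    (hw : 2 ≤ w) :
    ENNReal.ofReal (c * (min 1 (2 ^ γ) * log w ^ γ) / (2 * w))
      ≤ ∫⁻ x in Ioo (2 * w)⁻¹ w⁻¹, ENNReal.ofReal (c * (-log |x|) ^ γ) := by
  have hlog : 0 < log w := log_pos (by linarith)
  have hvol : volume (Ioo (2 * w)⁻¹ w⁻¹) = ENNReal.ofReal (2 * w)⁻¹ := by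
    rw [volume_Ioo]
    congr 1
    field_simp
    norm_num
  rw [div_eq_mul_inv, ENNReal.ofReal_mul (by positivity), ← hvol, ← setLIntegral_const]
  refine setLIntegral_mono' measurableSet_Ioo fun x hx => ENNReal.ofReal_le_ofReal ?_
  obtain ⟨hlower, hupper⟩ := neg_log_mem_Icc_log hw hx
  rw [log_abs]
  gcongr
  exact min_one_rpow_mul_rpow_le_rpow γ hlog zero_le_two hlower hupper

end

theorem stmt_13_general (γ δ c : ℝ) (hδ0 : 0 < δ) (hδ1 : δ < 1) (hc : 0 < c) (μ : Measure ℝ)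
    (hdom : ∀ E : Set ℝ, MeasurableSet E → E ⊆ {x : ℝ | 0 < |x| ∧ |x| < δ} →
      ∫⁻ x in E, ENNReal.ofReal (c * (-Real.log |x|) ^ γ / x ^ 2) ≤ μ E) :
    ∃ c' > (0 : ℝ), ∃ R : ℝ, ∀ z : ℝ, R ≤ |z| →
      ENNReal.ofReal (c' * (|z| * Real.log |z| ^ γ))
        ≤ ∫⁻ x in ({0}ᶜ : Set ℝ), ENNReal.ofReal (1 - Real.cos (z * x)) ∂μ := by
  refine ⟨c * min 1 (2 ^ γ) / Real.pi ^ 2, by positivity, 2 / δ, fun z hz => ?_⟩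
  have hzδ : 2 ≤ |z| * δ := (div_le_iff₀ hδ0).1 hz
  have hz2 : 2 ≤ |z| := hzδ.trans (mul_le_of_le_one_right (abs_nonneg z) hδ1.le)
  have hz0 : 0 < |z| := by linarith
  have hinv : |z|⁻¹ < δ := (inv_lt_iff_one_lt_mul₀ hz0).2 (by linarith)
  set s := Set.Ioo (2 * |z|)⁻¹ |z|⁻¹
  have hpos : ∀ x ∈ s, 0 < x := fun x hx => lt_trans (by positivity) hx.1
  have hs0 : 0 ∉ s := fun h => (hpos 0 h).false
  have hsδ : s ⊆ {x : ℝ | 0 < |x| ∧ |x| < δ} := fun x hx =>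
    ⟨abs_pos.2 (hpos x hx).ne', (abs_of_pos (hpos x hx)).trans_lt (hx.2.trans hinv)⟩
  have hzs : ∀ x ∈ s, |z * x| ≤ Real.pi := fun x hx => by
    rw [abs_mul, abs_of_pos (hpos x hx)]
    linarith [(lt_div_iff₀' hz0).1 (hx.2.trans_eq (inv_eq_one_div _)), Real.pi_gt_three]
  calc _ = ENNReal.ofReal (2 / Real.pi ^ 2 * z ^ 2)
          * ENNReal.ofReal (c * (min 1 (2 ^ γ) * Real.log |z| ^ γ) / (2 * |z|)) := by
        rw [← ENNReal.ofReal_mul (by positivity), ← sq_abs z]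
        congr 1
        field_simp
    _ ≤ ENNReal.ofReal (2 / Real.pi ^ 2 * z ^ 2)
          * ∫⁻ x in s, ENNReal.ofReal (c * (-Real.log |x|) ^ γ) := by
        gcongr
        exact ofReal_log_rpow_div_le_setLIntegral_neg_log_rpow γ hc.le hz2
    _ ≤ _ := ofReal_mul_setLIntegral_le_lintegral_one_sub_cos measurableSet_Ioo hs0
        (by fun_prop) (fun E hE hEs => hdom E hE (hEs.trans hsδ)) hzs

/-- Example 4.7: if `μ ≥ c (-log|x|)^γ x⁻² dx` on `{0 < |x| < δ}` with
`0 < δ < 1`, then `liminf_{|z|→∞} (∫ (1 - cos(z x)) μ(dx)) / (|z| log^γ|z|) > 0`. -/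
theorem stmt_13 (γ δ c : ℝ) (hγ : 0 < γ) (hδ0 : 0 < δ) (hδ1 : δ < 1) (hc : 0 < c)
    (μ : Measure ℝ) (hμ0 : μ {0} = 0)
    (hdom : ∀ E : Set ℝ, MeasurableSet E → E ⊆ {x : ℝ | 0 < |x| ∧ |x| < δ} →
      ∫⁻ x in E, ENNReal.ofReal (c * (-Real.log |x|) ^ γ / x ^ 2) ≤ μ E) :
    ∃ c' > (0 : ℝ), ∃ R : ℝ, ∀ z : ℝ, R ≤ |z| →
      ENNReal.ofReal (c' * (|z| * Real.log |z| ^ γ))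
        ≤ ∫⁻ x in ({0}ᶜ : Set ℝ), ENNReal.ofReal (1 - Real.cos (z * x)) ∂μ :=
  stmt_13_general γ δ c hδ0 hδ1 hc μ hdom
end

section
/- Let γ > 0 and let ψ : ℝ → ℂ be continuous with Re ψ(z) ≥ 0 for all z and liminf_{|z|→∞} |ψ(z)|/(|z|·log^{1+γ}|z|) > 0. Then ∫_ℝ 1_{{|Im ψ(z)| > 1 + Re ψ(z)}} · |Im ψ(z)| / ((1+Re ψ(z))² + (Im ψ(z))²) dz < ∞. -/
open MeasureTheory

/-!
Where `|Im ψ| > 1 + Re ψ` and `Re ψ ≥ 0`, the imaginary part carries a fixed proportion of `‖ψ‖` and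
exceeds `1`, so the integrand is at most `min 1 (√2 / ‖ψ‖)`. The bound `1` settles any bounded
region. Near infinity the growth of `ψ` leaves `1 / (‖z‖ ^ d * log ‖z‖ ^ (1 + γ))` in dimension `d`;
polar coordinates followed by the substitution `u = log ‖z‖` turn its integral into that of
`u ^ (-(1 + γ))`, which converges.
-/

open Set Metric Module
open scoped ENNReal

section Integrand

/-- The integrand of the extended Kanda–Forst–Rao condition with `f ≡ 1`, as a function of the value
`w = ψ z` of the exponent. It is `ℝ≥0∞`-valued so that finiteness of its integral is meaningful
without any integrability assumption. -/
noncomputable def ekfrIntegrand (w : ℂ) : ℝ≥0∞ :=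
  {w : ℂ | 1 + w.re < |w.im|}.indicator
    (fun w => ENNReal.ofReal (|w.im| / ((1 + w.re) ^ 2 + w.im ^ 2))) w

theorem abs_div_sq_add_sq_le_inv_abs (a b : ℝ) : |b| / (a ^ 2 + b ^ 2) ≤ |b|⁻¹ := by
  rcases eq_or_ne b 0 with rfl | hb
  · simp
  · calc |b| / (a ^ 2 + b ^ 2) ≤ |b| / |b| ^ 2 := by
          rw [sq_abs]; gcongr; exact le_add_of_nonneg_left (sq_nonneg a)
      _ = |b|⁻¹ := by field_simp

theorem norm_le_sqrt_two_mul_abs_im {w : ℂ} (h : |w.re| ≤ |w.im|) : ‖w‖ ≤ √2 * |w.im| := by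
  simpa only [max_eq_right h] using w.norm_le_sqrt_two_mul_max

theorem ekfrIntegrand_le_ofReal_inv_abs_im (w : ℂ) :
    ekfrIntegrand w ≤ ENNReal.ofReal |w.im|⁻¹ :=
  indicator_apply_le' (fun _ => ENNReal.ofReal_le_ofReal (abs_div_sq_add_sq_le_inv_abs _ _))
    fun _ => zero_le

theorem ekfrIntegrand_eq_zero_of_abs_im_le {w : ℂ} (h : |w.im| ≤ 1 + w.re) : ekfrIntegrand w = 0 :=
  indicator_of_notMem (s := {w : ℂ | 1 + w.re < |w.im|}) (not_lt.2 h) _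

theorem ekfrIntegrand_le_one {w : ℂ} (hw : 0 ≤ w.re) : ekfrIntegrand w ≤ 1 := by
  rcases le_or_gt |w.im| (1 + w.re) with h | h
  · simp only [ekfrIntegrand_eq_zero_of_abs_im_le h, zero_le]
  · have one_le_im : 1 ≤ |w.im| := by linarith
    exact (ekfrIntegrand_le_ofReal_inv_abs_im w).trans
      (ENNReal.ofReal_le_one.2 (inv_le_one_of_one_le₀ one_le_im))

theorem ekfrIntegrand_le_ofReal_sqrt_two_mul_inv_norm {w : ℂ} (hw : 0 ≤ w.re) :
    ekfrIntegrand w ≤ ENNReal.ofReal (√2 * ‖w‖⁻¹) := by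
  rcases le_or_gt |w.im| (1 + w.re) with h | h
  · simp only [ekfrIntegrand_eq_zero_of_abs_im_le h, zero_le]
  · have im_pos : 0 < |w.im| := by linarith
    have norm_pos : 0 < ‖w‖ := im_pos.trans_le w.abs_im_le_norm
    have norm_le : ‖w‖ ≤ √2 * |w.im| :=
      norm_le_sqrt_two_mul_abs_im (by rw [abs_of_nonneg hw]; linarith)
    refine (ekfrIntegrand_le_ofReal_inv_abs_im w).trans (ENNReal.ofReal_le_ofReal ?_)
    rw [← div_eq_mul_inv, le_div_iff₀ norm_pos, inv_mul_le_iff₀ im_pos]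
    linarith

theorem lintegral_ekfrIntegrand_lt_top_of_inv_norm_le {α : Type*} [MeasurableSpace α]
    {μ : Measure α} {ψ : α → ℂ} (hre : ∀ x, 0 ≤ (ψ x).re) {K : Set α} (hK : MeasurableSet K)
    (hμK : μ K < ∞) {h : α → ℝ} (hh : IntegrableOn h Kᶜ μ)
    (hψ : ∀ x ∉ K, ‖ψ x‖⁻¹ ≤ h x) :
    ∫⁻ x, ekfrIntegrand (ψ x) ∂μ < ∞ := by
  have on_K : ∫⁻ x in K, ekfrIntegrand (ψ x) ∂μ ≤ μ K := by
    simpa only [setLIntegral_one] using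
      setLIntegral_mono' (μ := μ) hK fun x _ => ekfrIntegrand_le_one (hre x)
  have off_K : ∫⁻ x in Kᶜ, ekfrIntegrand (ψ x) ∂μ
      ≤ ∫⁻ x in Kᶜ, ENNReal.ofReal (√2 * h x) ∂μ :=
    setLIntegral_mono' hK.compl fun x hx =>
      (ekfrIntegrand_le_ofReal_sqrt_two_mul_inv_norm (hre x)).trans <|
        ENNReal.ofReal_le_ofReal (mul_le_mul_of_nonneg_left (hψ x hx) (Real.sqrt_nonneg 2))
  rw [← lintegral_add_compl _ hK]
  exact ENNReal.add_lt_top.2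
    ⟨on_K.trans_lt hμK, off_K.trans_lt (hh.const_mul (√2)).lintegral_lt_top⟩

end Integrand

theorem integrableOn_Ioi_inv_mul_log_rpow {a s : ℝ} (ha : 1 < a) (hs : 1 < s) :
    IntegrableOn (fun x : ℝ => (x * Real.log x ^ s)⁻¹) (Ioi a) := by
  have comp_log : IntegrableOn (fun x : ℝ => x⁻¹ • Real.log x ^ (-s)) (Ioi a) :=
    (integrableOn_comp_log_Ioi (fun u : ℝ => u ^ (-s)) (by linarith)).2
      (integrableOn_Ioi_rpow_of_lt (by linarith) (Real.log_pos ha))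
  refine comp_log.congr_fun (fun x hx => ?_) measurableSet_Ioi
  have log_nonneg : 0 ≤ Real.log x := Real.log_nonneg (ha.trans hx).le
  simp only [smul_eq_mul, Real.rpow_neg log_nonneg, mul_inv]

section Polar

variable {E : Type*} [NormedAddCommGroup E] [NormedSpace ℝ E] [FiniteDimensional ℝ E]
  [Nontrivial E] [MeasurableSpace E] [BorelSpace E] (μ : Measure E) [μ.IsAddHaarMeasure]

theorem integrableOn_compl_closedBall_fun_norm_addHaar {F : Type*} [NormedAddCommGroup F]
    [NormedSpace ℝ F] {f : ℝ → F} {r : ℝ} (hr : 0 ≤ r) :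
    IntegrableOn (fun x : E => f ‖x‖) (closedBall 0 r)ᶜ μ ↔
      IntegrableOn (fun y => y ^ (finrank ℝ E - 1) • f y) (Ioi r) := by
  have indicator_norm : (closedBall (0 : E) r)ᶜ.indicator (fun x => f ‖x‖) =
      fun x => (Ioi r).indicator f ‖x‖ := by
    ext x; simp [indicator]
  have indicator_smul : (fun y => y ^ (finrank ℝ E - 1) • (Ioi r).indicator f y) =
      (Ioi r).indicator fun y => y ^ (finrank ℝ E - 1) • f y :=
    (indicator_smul _ _ _).symm
  rw [← integrable_indicator_iff measurableSet_closedBall.compl, indicator_norm,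
    integrable_fun_norm_addHaar, indicator_smul, integrableOn_indicator_iff measurableSet_Ioi,
    inter_eq_left.2 (Ioi_subset_Ioi hr)]

theorem integrableOn_compl_closedBall_inv_norm_pow_mul_log_rpow {r s : ℝ} (hr : 1 < r)
    (hs : 1 < s) :
    IntegrableOn (fun x : E => (‖x‖ ^ finrank ℝ E * Real.log ‖x‖ ^ s)⁻¹) (closedBall 0 r)ᶜ μ := by
  rw [integrableOn_compl_closedBall_fun_norm_addHaar μ
    (f := fun y => (y ^ finrank ℝ E * Real.log y ^ s)⁻¹) (by linarith)]
  refine (integrableOn_Ioi_inv_mul_log_rpow hr hs).congr_fun (fun y hy => ?_) measurableSet_Ioi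
  have y_ne_zero : y ≠ 0 := (zero_lt_one.trans (hr.trans hy)).ne'
  obtain ⟨d, hd⟩ := Nat.exists_eq_add_one.2 (finrank_pos (R := ℝ) (M := E))
  simp only [hd, Nat.add_sub_cancel, smul_eq_mul, pow_succ, mul_inv]
  field_simp

theorem stmt_14_general {γ : ℝ} (hγ : 0 < γ) {ψ : E → ℂ} (hre : ∀ z, 0 ≤ (ψ z).re)
    (hliminf : ∃ c > (0 : ℝ), ∃ R : ℝ, ∀ z : E, R ≤ ‖z‖ →
      c ≤ ‖ψ z‖ / (‖z‖ ^ finrank ℝ E * Real.log ‖z‖ ^ (1 + γ))) :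
    ∫⁻ z, ekfrIntegrand (ψ z) ∂μ < ∞ := by
  obtain ⟨c, hc, R, hR⟩ := hliminf
  have one_lt_radius : 1 < max R 2 := one_lt_two.trans_le (le_max_right R 2)
  have majorant_integrable :=
    (integrableOn_compl_closedBall_inv_norm_pow_mul_log_rpow μ one_lt_radius
      (lt_add_of_pos_right 1 hγ)).const_mul c⁻¹
  refine lintegral_ekfrIntegrand_lt_top_of_inv_norm_le hre measurableSet_closedBall
    measure_closedBall_lt_top majorant_integrable fun z hz => ?_
  have radius_lt : max R 2 < ‖z‖ := by simpa only [mem_closedBall_zero_iff, not_le] using hz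
  have norm_pos : 0 < ‖z‖ := by linarith
  have log_pos : 0 < Real.log ‖z‖ := Real.log_pos (one_lt_radius.trans radius_lt)
  have growth := hR z ((le_max_left R 2).trans radius_lt.le)
  rw [le_div_iff₀ (by positivity)] at growth
  rw [← mul_inv]
  exact inv_anti₀ (by positivity) growth

end Polar

/-- Verification of the (EKFR) condition with `f ≡ 1` in the proof of
Proposition 4.8: if `ψ : ℝ → ℂ` is continuous with `Re ψ ≥ 0` and
`liminf_{|z|→∞} |ψ(z)|/(|z| log^{1+γ}|z|) > 0`, then
`∫_ℝ 1_{|Im ψ| > 1 + Re ψ} |Im ψ| / ((1+Re ψ)² + (Im ψ)²) dz < ∞`. -/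
theorem stmt_14 (γ : ℝ) (hγ : 0 < γ) (ψ : ℝ → ℂ) (hψ : Continuous ψ)
    (hre : ∀ z, 0 ≤ (ψ z).re)
    (hliminf : ∃ c > (0 : ℝ), ∃ R : ℝ, ∀ z : ℝ, R ≤ |z| →
      c ≤ ‖ψ z‖ / (|z| * Real.log |z| ^ (1 + γ))) :
    ∫⁻ z : ℝ,
        {z : ℝ | 1 + (ψ z).re < |(ψ z).im|}.indicator
          (fun z => ENNReal.ofReal
            (|(ψ z).im| / ((1 + (ψ z).re) ^ 2 + (ψ z).im ^ 2))) z
      < ⊤ :=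
  stmt_14_general volume hγ hre <| by
    simpa only [Real.norm_eq_abs, finrank_self, pow_one] using hliminf
end

section
/- Let 1/2 < α < 1 and let n ≥ 2 be a real number. Then for every z ∈ [n/2, 2n]: ∫_{1/(2n²)}^{1/n²} (1 − cos(zx))·x^{−1−α} dx ≤ 2n^{2α−2}/(2−α) and ∫_{1/(2n²)}^{1/n²} sin(zx)·x^{−1−α} dx ≥ n^{2α−1}/8. -/
open MeasureTheory intervalIntegral

/-!
Both estimates compare the trigonometric factor with a power of `x`. Since `1 - cos y ≤ y² / 2`,
the first integrand is at most `z² / 2 * x ^ (1 - α)`, which is integrable down to `0` for `α < 2`.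
On the band, `z * x ≤ 2 / n ≤ π / 2`, so Jordan's inequality `2 / π * y ≤ sin y` bounds the second
integrand below by `2 / π * z * x ^ (-α)`, which for `α ≥ 0` is smallest at the right endpoint.
-/

section PowerWeight

variable {α z a b x : ℝ}

lemma one_sub_cos_mul_rpow_le (hx : 0 < x) :
    (1 - Real.cos (z * x)) * x ^ (-1 - α) ≤ z ^ 2 / 2 * x ^ (1 - α) := by
  have one_sub_cos_le : 1 - Real.cos (z * x) ≤ z ^ 2 / 2 * x ^ 2 := by
    linarith [Real.one_sub_sq_div_two_le_cos (x := z * x), mul_pow z x 2]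
  calc (1 - Real.cos (z * x)) * x ^ (-1 - α)
      ≤ z ^ 2 / 2 * x ^ 2 * x ^ (-1 - α) := by gcongr
    _ = z ^ 2 / 2 * x ^ (1 - α) := by
      rw [mul_assoc, ← Real.rpow_two x, ← Real.rpow_add hx]
      ring_nf

lemma integral_one_sub_cos_mul_rpow_le (hα : α < 2) (ha : 0 ≤ a) (hab : a ≤ b) :
    ∫ x in a..b, (1 - Real.cos (z * x)) * x ^ (-1 - α) ≤
      z ^ 2 / 2 * (b ^ (2 - α) / (2 - α)) := by
  have hr : -1 < 1 - α := by linarith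
  calc ∫ x in a..b, (1 - Real.cos (z * x)) * x ^ (-1 - α)
      ≤ ∫ x in a..b, z ^ 2 / 2 * x ^ (1 - α) := by
        rw [integral_of_le hab, integral_of_le hab]
        refine integral_mono_of_nonneg ?_ ((intervalIntegrable_rpow' hr).const_mul _).1 ?_
        · filter_upwards [ae_restrict_mem measurableSet_Ioc] with x hx
          exact mul_nonneg (sub_nonneg.2 (Real.cos_le_one _))
            (Real.rpow_nonneg (ha.trans hx.1.le) _)
        · filter_upwards [ae_restrict_mem measurableSet_Ioc] with x hx
          exact one_sub_cos_mul_rpow_le (ha.trans_lt hx.1)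
    _ = z ^ 2 / 2 * ((b ^ (2 - α) - a ^ (2 - α)) / (2 - α)) := by
        rw [intervalIntegral.integral_const_mul, integral_rpow (.inl hr),
          show 1 - α + 1 = 2 - α by ring]
    _ ≤ z ^ 2 / 2 * (b ^ (2 - α) / (2 - α)) := by
        have : 0 < 2 - α := by linarith
        gcongr
        exact sub_le_self _ (Real.rpow_nonneg ha _)

lemma two_div_pi_mul_rpow_le_sin_mul_rpow (hz : 0 ≤ z) (hx : 0 < x)
    (hzx : z * x ≤ Real.pi / 2) :
    2 / Real.pi * z * x ^ (-α) ≤ Real.sin (z * x) * x ^ (-1 - α) :=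
  calc 2 / Real.pi * z * x ^ (-α)
      = 2 / Real.pi * (z * x) * x ^ (-1 - α) := by
        rw [show -α = 1 + (-1 - α) by ring, Real.rpow_add hx, Real.rpow_one]
        ring
    _ ≤ Real.sin (z * x) * x ^ (-1 - α) := by
        gcongr
        exact Real.mul_le_sin (mul_nonneg hz hx.le) hzx

lemma le_integral_sin_mul_rpow (hα : 0 ≤ α) (hz : 0 ≤ z) (ha : 0 < a) (hab : a ≤ b)
    (hzb : z * b ≤ Real.pi / 2) :
    (b - a) * (2 / Real.pi * z * b ^ (-α)) ≤
      ∫ x in a..b, Real.sin (z * x) * x ^ (-1 - α) := by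
  have integrable : IntervalIntegrable (fun x ↦ Real.sin (z * x) * x ^ (-1 - α)) volume a b :=
    (intervalIntegrable_rpow (.inr (Set.notMem_uIcc_of_lt ha (ha.trans_le hab)))).continuousOn_mul
      (by fun_prop)
  rw [← smul_eq_mul, ← intervalIntegral.integral_const]
  refine integral_mono_on hab intervalIntegrable_const integrable fun x hx ↦ ?_
  have hx0 : 0 < x := ha.trans_le hx.1
  calc 2 / Real.pi * z * b ^ (-α)
      ≤ 2 / Real.pi * z * x ^ (-α) := by
        gcongr ?_ * ?_
        exact Real.rpow_le_rpow_of_nonpos hx0 hx.2 (neg_nonpos.2 hα)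
    _ ≤ Real.sin (z * x) * x ^ (-1 - α) :=
        two_div_pi_mul_rpow_le_sin_mul_rpow hz hx0
          ((mul_le_mul_of_nonneg_left hx.2 hz).trans hzb)

end PowerWeight

lemma one_div_sq_rpow {n : ℝ} (hn : 0 ≤ n) (s : ℝ) : (1 / n ^ 2) ^ s = n ^ (-2 * s) := by
  rw [Real.rpow_mul hn, Real.rpow_neg hn, Real.rpow_two, one_div]

section Band

variable {α n z : ℝ}

lemma integral_one_sub_cos_band_le (hα : α < 2) (hn : 0 < n) (hz : |z| ≤ 2 * n) :
    ∫ x in (1 / (2 * n ^ 2))..(1 / n ^ 2), (1 - Real.cos (z * x)) * x ^ (-1 - α) ≤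
      2 * n ^ (2 * α - 2) / (2 - α) := by
  have hab : 1 / (2 * n ^ 2) ≤ 1 / n ^ 2 := by gcongr; linarith [sq_nonneg n]
  have : 0 < 2 - α := by linarith
  have hz_sq : z ^ 2 ≤ (2 * n) ^ 2 := sq_le_sq' (abs_le.1 hz).1 (abs_le.1 hz).2
  calc ∫ x in (1 / (2 * n ^ 2))..(1 / n ^ 2), (1 - Real.cos (z * x)) * x ^ (-1 - α)
      ≤ z ^ 2 / 2 * ((1 / n ^ 2) ^ (2 - α) / (2 - α)) :=
        integral_one_sub_cos_mul_rpow_le hα (by positivity) hab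
    _ ≤ (2 * n) ^ 2 / 2 * ((1 / n ^ 2) ^ (2 - α) / (2 - α)) := by gcongr
    _ = 2 * n ^ (2 * α - 2) / (2 - α) := by
        rw [one_div_sq_rpow hn.le, show 2 * α - 2 = 2 + -2 * (2 - α) by ring,
          Real.rpow_add hn, Real.rpow_two]
        ring

lemma le_integral_sin_band (hα : 0 ≤ α) (hn : 4 / Real.pi ≤ n)
    (hz : z ∈ Set.Icc (n / 2) (2 * n)) :
    n ^ (2 * α - 1) / 8 ≤
      ∫ x in (1 / (2 * n ^ 2))..(1 / n ^ 2), Real.sin (z * x) * x ^ (-1 - α) := by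
  obtain ⟨hz_lower, hz_upper⟩ := hz
  have hn0 : 0 < n := lt_of_lt_of_le (by positivity) hn
  have hz0 : 0 ≤ z := by linarith
  have hab : 1 / (2 * n ^ 2) ≤ 1 / n ^ 2 := by gcongr; linarith [sq_nonneg n]
  have phase_le : z * (1 / n ^ 2) ≤ Real.pi / 2 :=
    calc z * (1 / n ^ 2) ≤ 2 * n * (1 / n ^ 2) := by gcongr
      _ = 2 / n := by field_simp
      _ ≤ 2 / (4 / Real.pi) := by gcongr
      _ = Real.pi / 2 := by field_simp; norm_num
  have half_le : 1 / 2 ≤ 2 / Real.pi := by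
    rw [div_le_div_iff₀ two_pos Real.pi_pos]
    linarith [Real.pi_le_four]
  calc n ^ (2 * α - 1) / 8
      = (1 / n ^ 2 - 1 / (2 * n ^ 2)) * (1 / 2 * (n / 2) * (1 / n ^ 2) ^ (-α)) := by
        rw [one_div_sq_rpow hn0.le, neg_mul_neg, Real.rpow_sub_one hn0.ne']
        field_simp
        norm_num
    _ ≤ (1 / n ^ 2 - 1 / (2 * n ^ 2)) * (2 / Real.pi * z * (1 / n ^ 2) ^ (-α)) := by
        have := sub_nonneg.2 hab
        gcongr
    _ ≤ ∫ x in (1 / (2 * n ^ 2))..(1 / n ^ 2), Real.sin (z * x) * x ^ (-1 - α) :=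
        le_integral_sin_mul_rpow hα hz0 (by positivity) hab phase_le

end Band

theorem stmt_15_general (α n : ℝ) (hα0 : 0 ≤ α) (hα2 : α < 2) (hn : 4 / Real.pi ≤ n)
    (z : ℝ) (hz : z ∈ Set.Icc (n / 2) (2 * n)) :
    (∫ x in (1 / (2 * n ^ 2))..(1 / n ^ 2), (1 - Real.cos (z * x)) * x ^ (-1 - α))
        ≤ 2 * n ^ (2 * α - 2) / (2 - α) ∧
    n ^ (2 * α - 1) / 8
        ≤ ∫ x in (1 / (2 * n ^ 2))..(1 / n ^ 2), Real.sin (z * x) * x ^ (-1 - α) := by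
  have hn0 : 0 < n := lt_of_lt_of_le (by positivity) hn
  have hz_abs : |z| ≤ 2 * n := abs_le.2 ⟨by linarith [hz.1], hz.2⟩
  exact ⟨integral_one_sub_cos_band_le hα2 hn0 hz_abs, le_integral_sin_band hα0 hn hz⟩

/-- Estimates (jkl1) and (jkl2) in Subsection 5.1: for `1/2 < α < 1`, `n ≥ 2`
and `z ∈ [n/2, 2n]`,
`∫_{1/(2n²)}^{1/n²} (1 - cos(z x)) x^{-1-α} dx ≤ 2 n^{2α-2}/(2-α)` and
`∫_{1/(2n²)}^{1/n²} sin(z x) x^{-1-α} dx ≥ n^{2α-1}/8`. -/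
theorem stmt_15 (α n : ℝ) (hα1 : 1 / 2 < α) (hα2 : α < 1) (hn : 2 ≤ n)
    (z : ℝ) (hz : z ∈ Set.Icc (n / 2) (2 * n)) :
    (∫ x in (1 / (2 * n ^ 2))..(1 / n ^ 2), (1 - Real.cos (z * x)) * x ^ (-1 - α))
        ≤ 2 * n ^ (2 * α - 2) / (2 - α) ∧
    n ^ (2 * α - 1) / 8
        ≤ ∫ x in (1 / (2 * n ^ 2))..(1 / n ^ 2), Real.sin (z * x) * x ^ (-1 - α) := by
  have four_div_pi_le : 4 / Real.pi ≤ 2 := by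
    rw [div_le_iff₀ Real.pi_pos]
    linarith [Real.two_le_pi]
  exact stmt_15_general α n (by linarith) (by linarith) (four_div_pi_le.trans hn) z hz
end
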